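/- Let q = 3. When d ≥ 3, the 3-state antiferromagnetic Potts model on the infinite d-ary tree has uniqueness for all β ∈ [(d−2)/(d+1), 1); that is, for every colour c ∈ [3], limsup_{n→∞} max_{τ:Λ_{d,n}→[3]} |Pr_{𝕋_{d,n}}[σ(v_{d,n}) = c ∣ σ(Λ_{d,n}) = τ] − 1/3| = 0. When d = 2, the same uniqueness conclusion holds for all β ∈ (0,1). -/

import Mathlib

open Filter

/-- Weight of a configuration of the `q`-state Potts model with parameter `β`
on the `d`-ary tree of height `n`.  A vertex of the tree is a pair of a depth
`k ≤ n` and a path of length `k`; the parent of a vertex of depth `k+1` is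
obtained by dropping the last step of its path.  The weight is
`β ^ (number of monochromatic edges)`. -/
noncomputable def treeWeight (q d n : ℕ) (β : ℝ)
    (σ : (Σ k : Fin (n + 1), (Fin k → Fin d)) → Fin q) : ℝ :=
  β ^ (Finset.univ.filter (fun p : Σ k : Fin n, (Fin (k + 1) → Fin d) =>
        σ ⟨p.1.succ, p.2⟩ = σ ⟨p.1.castSucc, fun i => p.2 i.castSucc⟩)).card

/-- The conditional probability, under the Gibbs distribution of the `q`-state
Potts model with parameter `β` on the `d`-ary tree `𝕋_{d,n}` of height `n`,
that the root receives colour `c` given that the leaves (the depth-`n`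
vertices) are coloured according to `τ`. -/
noncomputable def condRootProb (q d n : ℕ) (β : ℝ)
    (τ : (Fin n → Fin d) → Fin q) (c : Fin q) : ℝ :=
  (∑ σ ∈ Finset.univ.filter
      (fun σ : (Σ k : Fin (n + 1), (Fin k → Fin d)) → Fin q =>
        σ ⟨⟨0, n.succ_pos⟩, Fin.elim0⟩ = c ∧
          ∀ f : Fin n → Fin d, σ ⟨⟨n, n.lt_succ_self⟩, f⟩ = τ f),
      treeWeight q d n β σ) /
  (∑ σ ∈ Finset.univ.filter
      (fun σ : (Σ k : Fin (n + 1), (Fin k → Fin d)) → Fin q =>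
        ∀ f : Fin n → Fin d, σ ⟨⟨n, n.lt_succ_self⟩, f⟩ = τ f),
      treeWeight q d n β σ)

/-- `γ(q,β,d,n)`: the maximum, over boundary configurations `τ` and colours
`c₁, c₂`, of the ratio of conditional root marginals. -/
noncomputable def pottsGamma (q d : ℕ) (β : ℝ) (n : ℕ) : ℝ :=
  ⨆ τ : (Fin n → Fin d) → Fin q, ⨆ c₁ : Fin q, ⨆ c₂ : Fin q,
    condRootProb q d n β τ c₁ / condRootProb q d n β τ c₂

/-- The function `g_{c₁,c₂,β}` of the two-step recursion. -/
noncomputable def gfun (q d : ℕ) (β : ℝ) (c₁ c₂ : Fin q) (p : Fin d → Fin q → ℝ) : ℝ :=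
  ∏ k : Fin d,
    (1 - ((1 - β) * (p k c₁ - p k c₂)) /
      (β * p k c₂ + ∑ c ∈ Finset.univ.erase c₂, p k c))

/-- The function `h_{c₁,c₂,β}` of the two-step recursion. -/
noncomputable def hfun (q d : ℕ) (β : ℝ) (c₁ c₂ : Fin q) (p : Fin d → Fin q → ℝ) : ℝ :=
  1 + ((1 - β) * (1 - gfun q d β c₁ c₂ p)) /
    (β + ∑ c ∈ Finset.univ.erase c₂, gfun q d β c c₂ p)

/-- `Δ_α`: probability vectors on `q` colours whose entries are within a
factor `α` of each other. -/
def simplexAlpha (q : ℕ) (α : ℝ) : Set (Fin q → ℝ) :=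
  {p | (∀ i, 0 ≤ p i) ∧ (∑ i, p i) = 1 ∧ ∀ i j, p i ≤ α * p j}

/-- `M_{α,c₁,c₂,β}`: the maximum of `h_{c₁,c₂,β}` over `Δ_α^d`. -/
noncomputable def Mval (q d : ℕ) (α β : ℝ) (c₁ c₂ : Fin q) : ℝ :=
  sSup ((hfun q d β c₁ c₂) '' {p | ∀ k, p k ∈ simplexAlpha q α})

/-- `Ex_c(α)`: vectors with entries in `{1, α}`, whose `c`-entry is `1`
and with at least one entry equal to `α`. -/
def exSet (q : ℕ) (c : Fin q) (α : ℝ) : Set (Fin q → ℝ) :=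
  {p | (∀ c', p c' = 1 ∨ p c' = α) ∧ p c = 1 ∧ ∃ c', p c' = α}

/-- The function `f_u(d,β,x,y)` from the one-step analysis. -/
noncomputable def fU (d : ℕ) (β x y : ℝ) : ℝ :=
  (1 - (1 - β) * y) ^ d /
    ((1 - (1 - β) * y) ^ d +
      2 * (1 - (1 - β) * x) ^ ((d : ℝ) / 2) *
        (1 - (1 - β) * (1 - x - y)) ^ ((d : ℝ) / 2))

/-- The function `f_ℓ(d,β,x,y)` from the one-step analysis. -/
noncomputable def fL (d : ℕ) (β x y : ℝ) : ℝ :=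
  (1 - (1 - β) * x) ^ d /
    ((1 - (1 - β) * x) ^ d + (1 - (1 - β) * y) ^ d +
      (1 - (1 - β) * (1 - x - y)) ^ d)

/-- The pair of sequences `(u_n(d,β), ℓ_n(d,β))`, defined by
`u_0 = 1`, `ℓ_0 = 0`, `u_{n+1} = f_u(d,β,u_n,ℓ_n)`, `ℓ_{n+1} = f_ℓ(d,β,u_n,ℓ_n)`. -/
noncomputable def ulSeq (d : ℕ) (β : ℝ) : ℕ → ℝ × ℝ
  | 0 => (1, 0)
  | n + 1 =>
      (fU d β (ulSeq d β n).1 (ulSeq d β n).2,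
       fL d β (ulSeq d β n).1 (ulSeq d β n).2)

namespace PottsTree

/-- The vertices of the `d`-ary tree of height `n`. -/
abbrev Vertex (d n : ℕ) : Type := Σ k : Fin (n + 1), (Fin k → Fin d)

/-- The interaction of two neighbouring colours. -/
noncomputable def edgeWeight {q : ℕ} (β : ℝ) (x y : Fin q) : ℝ := if x = y then β else 1

/-- Glue a root colour and configurations on the `d` subtrees of the root. -/
def glue {q d n : ℕ} (c : Fin q) (s : Fin d → Vertex d n → Fin q) : Vertex d (n + 1) → Fin q
  | ⟨⟨0, _⟩, _⟩ => c
  | ⟨⟨k + 1, h⟩, f⟩ =>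
      s (f ⟨0, k.succ_pos⟩) ⟨⟨k, Nat.lt_of_succ_lt_succ h⟩, fun i => f i.succ⟩

/-- The restriction of a configuration to the `j`-th subtree of the root. -/
def branch {q d n : ℕ} (σ : Vertex d (n + 1) → Fin q) (j : Fin d) : Vertex d n → Fin q :=
  fun v => σ ⟨v.1.succ, Fin.cons (α := fun _ => Fin d) j v.2⟩

/-- The colour of the root. -/
def rootColour {q d n : ℕ} (σ : Vertex d n → Fin q) : Fin q :=
  σ ⟨⟨0, n.succ_pos⟩, Fin.elim0⟩

/-- A configuration is a root colour together with a configuration on each subtree. -/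
def glueEquiv (q d n : ℕ) :
    (Fin q × (Fin d → Vertex d n → Fin q)) ≃ (Vertex d (n + 1) → Fin q) where
  toFun x := glue x.1 x.2
  invFun σ := (rootColour σ, branch σ)
  left_inv := by
    rintro ⟨c, s⟩
    rfl
  right_inv := by
    intro σ
    funext ⟨⟨k, hk⟩, f⟩
    cases k with
    | zero =>
      simp only [glue, rootColour]
      congr 2
      exact Subsingleton.elim _ _
    | succ k =>
      simp only [glue, branch]
      congr 2
      exact Fin.cons_self_tail f

lemma treeWeight_eq_prod (q d n : ℕ) (β : ℝ) (σ : Vertex d n → Fin q) :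
    treeWeight q d n β σ = ∏ k : Fin n, ∏ f : Fin (k + 1) → Fin d,
      edgeWeight β (σ ⟨k.succ, f⟩) (σ ⟨k.castSucc, fun i => f i.castSucc⟩) := by
  unfold treeWeight edgeWeight
  rw [← Finset.prod_const, Finset.prod_filter, Fintype.prod_sigma]

lemma prod_cons {d k : ℕ} (F : (Fin (k + 1) → Fin d) → ℝ) :
    ∏ f, F f = ∏ j : Fin d, ∏ g : Fin k → Fin d, F (Fin.cons (α := fun _ => Fin d) j g) := by
  rw [← Fintype.prod_prod_type', ← (Fin.consEquiv (fun _ : Fin (k + 1) => Fin d)).prod_comp]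
  rfl

lemma treeWeight_succ (q d n : ℕ) (β : ℝ) (σ : Vertex d (n + 1) → Fin q) :
    treeWeight q d (n + 1) β σ = ∏ j : Fin d,
      edgeWeight β (rootColour (branch σ j)) (rootColour σ) * treeWeight q d n β (branch σ j) := by
  rw [treeWeight_eq_prod, Fin.prod_univ_succ, Finset.prod_mul_distrib]
  congr 1
  · rw [prod_cons]
    refine Finset.prod_congr rfl fun j _ => ?_
    change ∏ g : Fin 0 → Fin d, _ = _
    rw [Fintype.prod_unique]
    unfold rootColour branch
    congr 3
    exact Subsingleton.elim (α := Fin 0 → Fin d) _ _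
  · simp_rw [treeWeight_eq_prod]
    rw [Finset.prod_comm]
    refine Finset.prod_congr rfl fun k _ => ?_
    refine (prod_cons (k := k + 1) _).trans ?_
    refine Finset.prod_congr rfl fun j _ => Finset.prod_congr rfl fun g _ => ?_
    congr 1
    unfold branch
    congr 2
    funext i
    refine Fin.cases ?_ (fun i => ?_) i <;> rfl

/-- The total weight of the configurations with root colour `c` and leaf colours `τ`. -/
noncomputable def rootWeight (q d n : ℕ) (β : ℝ) (τ : (Fin n → Fin d) → Fin q) (c : Fin q) : ℝ :=
  ∑ σ ∈ Finset.univ.filter (fun σ : Vertex d n → Fin q => rootColour σ = c ∧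
      ∀ f : Fin n → Fin d, σ ⟨⟨n, n.lt_succ_self⟩, f⟩ = τ f), treeWeight q d n β σ

lemma condRootProb_eq (q d n : ℕ) (β : ℝ) (τ : (Fin n → Fin d) → Fin q) (c : Fin q) :
    condRootProb q d n β τ c = rootWeight q d n β τ c / ∑ c', rootWeight q d n β τ c' := by
  unfold condRootProb rootWeight
  congr 1
  rw [← Finset.sum_fiberwise_of_maps_to (t := Finset.univ)
    (g := fun σ : Vertex d n → Fin q => rootColour σ) (fun _ _ => Finset.mem_univ _)]
  refine Finset.sum_congr rfl fun c' _ => ?_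
  rw [Finset.filter_filter]
  refine Finset.sum_congr ?_ fun _ _ => rfl
  ext σ
  simp [and_comm]

/-- The boundary condition induced on the `j`-th subtree of the root. -/
def subBoundary {q d n : ℕ} (τ : (Fin (n + 1) → Fin d) → Fin q) (j : Fin d) :
    (Fin n → Fin d) → Fin q :=
  fun f => τ (Fin.cons (α := fun _ => Fin d) j f)

lemma leaves_iff {q d n : ℕ} (σ : Vertex d (n + 1) → Fin q) (τ : (Fin (n + 1) → Fin d) → Fin q) :
    (∀ f, σ ⟨⟨n + 1, (n + 1).lt_succ_self⟩, f⟩ = τ f) ↔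
      ∀ j, ∀ f, branch σ j ⟨⟨n, n.lt_succ_self⟩, f⟩ = subBoundary τ j f := by
  constructor
  · intro h j f
    exact h _
  · intro h f
    have := h (f 0) (Fin.tail f)
    unfold branch subBoundary at this
    rw [Fin.cons_self_tail] at this
    rw [← this]
    congr 2

lemma rootWeight_succ (q d n : ℕ) (β : ℝ) (τ : (Fin (n + 1) → Fin d) → Fin q) (c : Fin q) :
    rootWeight q d (n + 1) β τ c =
      ∏ j : Fin d, ∑ c', edgeWeight β c' c * rootWeight q d n β (subBoundary τ j) c' := by
  classical
  have hinner : ∀ j : Fin d,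
      ∑ c', edgeWeight β c' c * rootWeight q d n β (subBoundary τ j) c' =
        ∑ s : Vertex d n → Fin q,
          if ∀ f, s ⟨⟨n, n.lt_succ_self⟩, f⟩ = subBoundary τ j f then
            edgeWeight β (rootColour s) c * treeWeight q d n β s else 0 := by
    intro j
    rw [← Finset.sum_fiberwise (s := Finset.univ)
      (g := fun s : Vertex d n → Fin q => rootColour s)]
    refine Finset.sum_congr rfl fun c' _ => ?_
    unfold rootWeight
    rw [Finset.mul_sum, Finset.sum_filter, Finset.sum_filter]
    refine Finset.sum_congr rfl fun s _ => ?_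
    by_cases h1 : rootColour s = c' <;> by_cases h2 : ∀ f, s ⟨⟨n, n.lt_succ_self⟩, f⟩ = subBoundary τ j f <;>
      simp [h1, h2]
  simp_rw [hinner]
  rw [Finset.prod_univ_sum, Fintype.piFinset_univ]
  unfold rootWeight
  rw [Finset.sum_filter, ← (glueEquiv q d n).sum_comp, Fintype.sum_prod_type,
    Finset.sum_eq_single c]
  · refine Finset.sum_congr rfl fun s _ => ?_
    have hroot : rootColour (glueEquiv q d n (c, s)) = c := rfl
    have hbr : branch (glueEquiv q d n (c, s)) = s := rfl
    have hl := leaves_iff (glueEquiv q d n (c, s)) τ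
    rw [hbr] at hl
    rw [treeWeight_succ, hroot, hbr]
    by_cases h : ∀ j, ∀ f, s j ⟨⟨n, n.lt_succ_self⟩, f⟩ = subBoundary τ j f
    · rw [if_pos ⟨rfl, hl.2 h⟩]
      exact Finset.prod_congr rfl fun j _ => (if_pos (h j)).symm
    · rw [if_neg (fun h' => h (hl.1 h'.2))]
      push Not at h
      obtain ⟨j, f, hf⟩ := h
      refine (Finset.prod_eq_zero (Finset.mem_univ j) ?_).symm
      exact if_neg fun h' => hf (h' f)
  · intro c' _ hc'
    refine Finset.sum_eq_zero fun s _ => if_neg ?_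
    rintro ⟨h, -⟩
    exact hc' h
  · simp

lemma rootWeight_zero (q d : ℕ) (β : ℝ) (τ : (Fin 0 → Fin d) → Fin q) (c : Fin q) :
    rootWeight q d 0 β τ c = if τ Fin.elim0 = c then 1 else 0 := by
  classical
  have hu : ∀ σ : Vertex d 0 → Fin q, treeWeight q d 0 β σ = 1 := by
    intro σ
    rw [treeWeight_eq_prod]
    simp
  unfold rootWeight
  simp_rw [hu]
  have huniq : ∀ v : Vertex d 0, v = ⟨⟨0, Nat.succ_pos 0⟩, Fin.elim0⟩ := by
    rintro ⟨⟨k, hk⟩, f⟩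
    obtain rfl : k = 0 := by omega
    congr 1
    exact Subsingleton.elim _ _
  split_ifs with h
  · rw [Finset.sum_const, nsmul_eq_mul, mul_one]
    norm_cast
    rw [Finset.card_eq_one]
    refine ⟨fun _ => c, ?_⟩
    ext σ
    simp only [Finset.mem_filter, Finset.mem_univ, true_and, Finset.mem_singleton]
    constructor
    · rintro ⟨h1, -⟩
      funext v
      rw [huniq v]
      exact h1
    · rintro rfl
      refine ⟨rfl, fun f => ?_⟩
      rw [← h]
      exact congrArg τ (Subsingleton.elim _ _)
  · refine Finset.sum_eq_zero fun σ hσ => ?_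
    exfalso
    simp only [Finset.mem_filter, Finset.mem_univ, true_and] at hσ
    exact h ((hσ.2 Fin.elim0).symm.trans hσ.1)

lemma rootWeight_nonneg {q d n : ℕ} {β : ℝ} (hβ : 0 ≤ β) (τ : (Fin n → Fin d) → Fin q)
    (c : Fin q) : 0 ≤ rootWeight q d n β τ c :=
  Finset.sum_nonneg fun _ _ => pow_nonneg hβ _

lemma sum_rootWeight_pos {q d n : ℕ} {β : ℝ} (hβ : 0 < β) (τ : (Fin n → Fin d) → Fin q)
    (hq : 0 < q) : 0 < ∑ c, rootWeight q d n β τ c := by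
  induction n with
  | zero => simp [rootWeight_zero]
  | succ n ih =>
    have : Nonempty (Fin q) := ⟨⟨0, hq⟩⟩
    refine Finset.sum_pos (fun c _ => ?_) Finset.univ_nonempty
    rw [rootWeight_succ]
    refine Finset.prod_pos fun j _ => ?_
    obtain ⟨c', -, hc'⟩ := Finset.exists_lt_of_sum_lt
      (show ∑ _c : Fin q, (0 : ℝ) < ∑ c, rootWeight q d n β (subBoundary τ j) c by
        simpa using ih (subBoundary τ j))
    have hw : ∀ x : Fin q, 0 < edgeWeight β x c := by
      intro x
      unfold edgeWeight
      split_ifs <;> positivity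
    refine Finset.sum_pos' (fun x _ => mul_nonneg (hw x).le (rootWeight_nonneg hβ.le _ _))
      ⟨c', Finset.mem_univ _, mul_pos (hw c') hc'⟩

lemma condRootProb_nonneg {q d n : ℕ} {β : ℝ} (hβ : 0 ≤ β) (τ : (Fin n → Fin d) → Fin q)
    (c : Fin q) : 0 ≤ condRootProb q d n β τ c := by
  rw [condRootProb_eq]
  exact div_nonneg (rootWeight_nonneg hβ _ _)
    (Finset.sum_nonneg fun _ _ => rootWeight_nonneg hβ _ _)

lemma sum_condRootProb {q d n : ℕ} {β : ℝ} (hβ : 0 < β) (τ : (Fin n → Fin d) → Fin q)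
    (hq : 0 < q) : ∑ c, condRootProb q d n β τ c = 1 := by
  simp_rw [condRootProb_eq]
  rw [← Finset.sum_div, div_self (sum_rootWeight_pos hβ τ hq).ne']

/-- The unnormalised message at a vertex whose children send the messages `p`. -/
noncomputable def message {q d : ℕ} (b : ℝ) (p : Fin d → Fin q → ℝ) (c : Fin q) : ℝ :=
  ∏ j, (1 - b * p j c)

lemma condRootProb_succ {q d n : ℕ} {β : ℝ} (hβ : 0 < β) (τ : (Fin (n + 1) → Fin d) → Fin q)
    (hq : 0 < q) (c : Fin q) :
    condRootProb q d (n + 1) β τ c =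
      message (1 - β) (fun j => condRootProb q d n β (subBoundary τ j)) c /
        ∑ c', message (1 - β) (fun j => condRootProb q d n β (subBoundary τ j)) c' := by
  have key : ∀ c, rootWeight q d (n + 1) β τ c =
      (∏ j, ∑ c', rootWeight q d n β (subBoundary τ j) c') *
        message (1 - β) (fun j => condRootProb q d n β (subBoundary τ j)) c := by
    intro c
    rw [rootWeight_succ, message, ← Finset.prod_mul_distrib]
    refine Finset.prod_congr rfl fun j _ => ?_
    have hS := sum_rootWeight_pos hβ (subBoundary τ j) hq
    rw [condRootProb_eq, mul_sub, mul_one, mul_left_comm, mul_div_cancel₀ _ hS.ne']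
    have : ∀ c', edgeWeight β c' c * rootWeight q d n β (subBoundary τ j) c' =
        rootWeight q d n β (subBoundary τ j) c' -
          if c' = c then (1 - β) * rootWeight q d n β (subBoundary τ j) c' else 0 := by
      intro c'
      unfold edgeWeight
      split_ifs <;> ring
    simp_rw [this]
    rw [Finset.sum_sub_distrib, Finset.sum_ite_eq']
    simp
  have hP : (∏ j : Fin d, ∑ c', rootWeight q d n β (subBoundary τ j) c') ≠ 0 :=
    (Finset.prod_pos fun j _ => sum_rootWeight_pos hβ (subBoundary τ j) hq).ne'
  rw [condRootProb_eq]
  simp_rw [key]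
  rw [← Finset.mul_sum, mul_div_mul_left _ _ hP]

/-- The entries of `p` are within a factor `(1 + T) / (1 - T)` of each other. -/
def Balanced {q : ℕ} (T : ℝ) (p : Fin q → ℝ) : Prop :=
  ∀ i j, p i - p j ≤ T * (p i + p j)

/-- The three extremal factors; the columns are the coordinates. -/
def extremal (N b T : ℝ) : Fin 3 → Fin 3 → ℝ :=
  ![![N - T - b * T, N - T + b * T, N - T + b * T],
    ![N + T - b * T, N + T + b * T, N + T - b * T],
    ![N - T + b * T, N - T + b * T, N - T - b * T]]

lemma exists_cone_of_le {b b' T p₁ p₂ p₃ : ℝ} (hb : 0 < b) (hb1 : b ≤ 1) (hb' : 0 ≤ b')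
    (hbb : b' ≤ b) (hT : 0 < T) (hT1 : T ≤ 1) (h₁ : 0 ≤ p₁) (h₂ : 0 ≤ p₂) (h₃ : 0 ≤ p₃)
    (hs : p₁ + p₂ + p₃ = 1) (h₁₂ : p₁ - p₂ ≤ T * (p₁ + p₂)) (h₁₃ : p₁ - p₃ ≤ T * (p₁ + p₃))
    (h₃₁ : p₃ - p₁ ≤ T * (p₃ + p₁))
    (hXY : max (p₃ - p₂) 0 ≤ max (p₁ - p₂) 0) :
    ∃ u v : ℝ, 0 ≤ u ∧ 0 ≤ v ∧
      u * (3 - b - T - b * T) + v * (3 - b + T - b * T) ≤ 1 - b' * p₁ ∧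
      u * (3 - b - T + b * T) + v * (3 - b + T + b * T) = 1 - b' * p₂ ∧
      u * (3 - b - T + b * T) + v * (3 - b + T - b * T) ≤ 1 - b' * p₃ := by
  set X := max (p₁ - p₂) 0 with hX
  set Y := max (p₃ - p₂) 0 with hY
  have hX0 : 0 ≤ X := le_max_right _ _
  have hY0 : 0 ≤ Y := le_max_right _ _
  have hX1 : p₁ - p₂ ≤ X := le_max_left _ _
  have hY1 : p₃ - p₂ ≤ Y := le_max_left _ _
  have hbT : 0 < b * T := mul_pos hb hT
  have hM : 0 < 3 - b - T + b * T := by nlinarith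
  have hXp : X * (1 - T) ≤ 2 * T * p₂ := by
    rcases max_cases (p₁ - p₂) 0 with h | h <;> rw [hX, h.1]
    · nlinarith
    · nlinarith [mul_nonneg hT.le h₂]
  have hmain : 2 * X + 2 * T * Y + 2 * T * p₂ ≤ 2 * T := by
    have e : 2 * T = 2 * T * (p₁ + p₂ + p₃) := by rw [hs, mul_one]
    rw [e]
    rcases max_cases (p₁ - p₂) 0 with h | h <;> rcases max_cases (p₃ - p₂) 0 with h' | h' <;>
      rw [← hX] at h <;> rw [← hY] at h' <;> rw [h.1, h'.1]
    · nlinarith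
    · nlinarith
    · nlinarith [mul_nonneg hT.le h₁, mul_nonneg hT.le h₂, mul_nonneg hT.le h₃]
    · nlinarith [mul_nonneg hT.le h₁, mul_nonneg hT.le h₂, mul_nonneg hT.le h₃]
  have hcrit : X * (3 - b - T + b * T) + 2 * T * Y + 2 * T * b * p₂ ≤ 2 * T := by
    have := mul_le_mul_of_nonneg_left hXp (sub_nonneg.2 hb1)
    nlinarith
  have hcrit' : b' * (X * (3 - b - T + b * T) + 2 * T * Y) ≤ 2 * b * T * (1 - b' * p₂) := by
    have e : 0 ≤ X * (3 - b - T + b * T) + 2 * T * Y := by positivity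
    have := mul_le_mul_of_nonneg_left hcrit hb'
    have h2 : b' * (2 * T) ≤ b * (2 * T) := mul_le_mul_of_nonneg_right hbb (by positivity)
    linarith
  refine ⟨(1 - b' * p₂ - b' * Y / (2 * b * T) * (3 - b + T + b * T)) / (3 - b - T + b * T),
    b' * Y / (2 * b * T), ?_, by positivity, ?_⟩
  all_goals
    set v := b' * Y / (2 * b * T) with hv
    have hvY : v * (2 * b * T) = b' * Y := by rw [hv]; field_simp
    have hv0 : 0 ≤ v := by positivity
  · refine div_nonneg ?_ hM.le
    have hXY' : b' * Y ≤ b' * X := mul_le_mul_of_nonneg_left hXY hb'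
    have h3 : 2 * b * T * (v * (3 - b + T + b * T)) ≤ 2 * b * T * (1 - b' * p₂) := by
      have e1 : 2 * b * T * (v * (3 - b + T + b * T)) = b' * Y * (3 - b + T + b * T) := by
        rw [← hvY]; ring
      rw [e1]
      have := mul_le_mul_of_nonneg_right hXY' hM.le
      linarith
    have := le_of_mul_le_mul_left h3 (by positivity)
    linarith
  · set u := (1 - b' * p₂ - v * (3 - b + T + b * T)) / (3 - b - T + b * T) with hu
    have hu' : u * (3 - b - T + b * T) = 1 - b' * p₂ - v * (3 - b + T + b * T) := by
      rw [hu]; field_simp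
    have huv : b' * X ≤ 2 * b * T * (u + v) := by
      refine le_of_mul_le_mul_right ?_ hM
      have e1 : 2 * b * T * (u + v) * (3 - b - T + b * T) =
          2 * b * T * (1 - b' * p₂ - v * (3 - b + T + b * T)) +
            b' * Y * (3 - b - T + b * T) := by
        rw [← hu', ← hvY]; ring
      have e2 : 2 * b * T * (v * (3 - b + T + b * T)) = b' * Y * (3 - b + T + b * T) := by
        rw [← hvY]; ring
      rw [e1]
      linarith
    have hb1X : b' * (p₁ - p₂) ≤ b' * X := mul_le_mul_of_nonneg_left hX1 hb'
    have hb1Y : b' * (p₃ - p₂) ≤ b' * Y := mul_le_mul_of_nonneg_left hY1 hb'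
    refine ⟨?_, ?_, ?_⟩ <;> linarith

lemma exists_cone {b b' T : ℝ} {p : Fin 3 → ℝ} (hb : 0 < b) (hb1 : b ≤ 1) (hb' : 0 ≤ b')
    (hbb : b' ≤ b) (hT : 0 < T) (hT1 : T ≤ 1) (hp : ∀ i, 0 ≤ p i) (hbal : Balanced T p)
    {c₁ c₂ c₃ : Fin 3} (hs : p c₁ + p c₂ + p c₃ = 1) :
    ∃ W : Fin 3 → ℝ, (∀ i, 0 ≤ W i) ∧
      ∑ i, W i * extremal (3 - b) b T i 0 ≤ 1 - b' * p c₁ ∧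
      ∑ i, W i * extremal (3 - b) b T i 1 = 1 - b' * p c₂ ∧
      ∑ i, W i * extremal (3 - b) b T i 2 ≤ 1 - b' * p c₃ := by
  rcases le_total (max (p c₃ - p c₂) 0) (max (p c₁ - p c₂) 0) with h | h
  · obtain ⟨u, v, hu, hv, e₁, e₂, e₃⟩ := exists_cone_of_le hb hb1 hb' hbb hT hT1 (hp c₁) (hp c₂)
      (hp c₃) hs (hbal _ _) (hbal _ _) (hbal _ _) h
    refine ⟨![u, v, 0], ?_, ?_⟩
    · intro i
      fin_cases i <;> simp [hu, hv]
    · simpa [Fin.sum_univ_three, extremal] using ⟨e₁, e₂, e₃⟩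
  · obtain ⟨u, v, hu, hv, e₁, e₂, e₃⟩ := exists_cone_of_le hb hb1 hb' hbb hT hT1 (hp c₃) (hp c₂)
      (hp c₁) (by linarith) (hbal _ _) (hbal _ _) (hbal _ _) h
    refine ⟨![0, v, u], ?_, ?_⟩
    · intro i
      fin_cases i <;> simp [hu, hv]
    · simp only [Fin.sum_univ_three, extremal]
      simp
      refine ⟨?_, ?_, ?_⟩ <;> linarith

/-- The linear inequality between the coordinates of products of extremal factors that drives
the two-step contraction. -/
def ExtremalIneq (d : ℕ) (N b T l : ℝ) : Prop :=
  ∀ g : Fin d → Fin 3,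
    N * (∏ k, extremal N b T (g k) 1 - ∏ k, extremal N b T (g k) 0) ≤
      l * T * ((N - 1) * (∏ k, extremal N b T (g k) 0 + ∏ k, extremal N b T (g k) 1) +
        2 * ∏ k, extremal N b T (g k) 2)

lemma extremal_nonneg {N b T : ℝ} (hb : 0 ≤ b) (hT : 0 ≤ T) (h : T + b * T ≤ N) (i j : Fin 3) :
    0 ≤ extremal N b T i j := by
  have := mul_nonneg hb hT
  fin_cases i <;> fin_cases j <;> simp [extremal] <;> linarith

lemma message_ineq_of_extremal {d : ℕ} {b b' T l : ℝ} {p : Fin d → Fin 3 → ℝ} (hb : 0 < b)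
    (hb1 : b ≤ 1) (hb' : 0 ≤ b') (hbb : b' ≤ b) (hT : 0 < T) (hT1 : T ≤ 1) (hl : 0 ≤ l)
    (hE : ExtremalIneq d (3 - b) b T l) (hp : ∀ k i, 0 ≤ p k i)
    (hbal : ∀ k, Balanced T (p k)) {c₁ c₂ c₃ : Fin 3} (hs : ∀ k, p k c₁ + p k c₂ + p k c₃ = 1) :
    (3 - b) * (message b' p c₂ - message b' p c₁) ≤
      l * T * ((2 - b) * (message b' p c₁ + message b' p c₂) + 2 * message b' p c₃) := by
  have hbT : b * T ≤ 1 := mul_le_one₀ hb1 hT.le hT1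
  have hext : ∀ i j, 0 ≤ extremal (3 - b) b T i j :=
    extremal_nonneg hb.le hT.le (by linarith)
  choose W hW h₁ h₂ h₃ using fun k =>
    exists_cone hb hb1 hb' hbb hT hT1 (hp k) (hbal k) (hs k)
  have hprod : ∀ j, ∏ k, ∑ i, W k i * extremal (3 - b) b T i j =
      ∑ g : Fin d → Fin 3, (∏ k, W k (g k)) * ∏ k, extremal (3 - b) b T (g k) j := by
    intro j
    rw [Finset.prod_univ_sum, Fintype.piFinset_univ]
    exact Finset.sum_congr rfl fun g _ => Finset.prod_mul_distrib
  have hnn : ∀ j k, 0 ≤ ∑ i, W k i * extremal (3 - b) b T i j := fun j k =>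
    Finset.sum_nonneg fun i _ => mul_nonneg (hW k i) (hext i j)
  have m₁ : ∏ k, ∑ i, W k i * extremal (3 - b) b T i 0 ≤ message b' p c₁ :=
    Finset.prod_le_prod (fun k _ => hnn 0 k) fun k _ => h₁ k
  have m₂ : ∏ k, ∑ i, W k i * extremal (3 - b) b T i 1 = message b' p c₂ :=
    Finset.prod_congr rfl fun k _ => h₂ k
  have m₃ : ∏ k, ∑ i, W k i * extremal (3 - b) b T i 2 ≤ message b' p c₃ :=
    Finset.prod_le_prod (fun k _ => hnn 2 k) fun k _ => h₃ k
  have hlT : 0 ≤ l * T := mul_nonneg hl hT.le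
  have hsum : (3 - b) * (∏ k, ∑ i, W k i * extremal (3 - b) b T i 1 -
        ∏ k, ∑ i, W k i * extremal (3 - b) b T i 0) ≤
      l * T * ((2 - b) * (∏ k, ∑ i, W k i * extremal (3 - b) b T i 0 +
        ∏ k, ∑ i, W k i * extremal (3 - b) b T i 1) +
        2 * ∏ k, ∑ i, W k i * extremal (3 - b) b T i 2) := by
    rw [hprod, hprod, hprod]
    simp only [← Finset.sum_sub_distrib, ← Finset.sum_add_distrib, Finset.mul_sum]
    refine Finset.sum_le_sum fun g _ => ?_
    have := mul_le_mul_of_nonneg_left (hE g) 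
      (Finset.prod_nonneg (s := Finset.univ) fun k _ => hW k (g k))
    linarith
  rw [m₂] at hsum
  have a₁ := mul_le_mul_of_nonneg_left m₁
    (show 0 ≤ 3 - b + l * T * (2 - b) by nlinarith)
  have a₃ := mul_le_mul_of_nonneg_left m₃ (show 0 ≤ 2 * (l * T) by linarith)
  linarith

/-- A probability vector on three colours. -/
def IsProb (p : Fin 3 → ℝ) : Prop := (∀ i, 0 ≤ p i) ∧ p 0 + p 1 + p 2 = 1

lemma IsProb.le_one {p : Fin 3 → ℝ} (hp : IsProb p) (i : Fin 3) : p i ≤ 1 := by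
  obtain ⟨h, hs⟩ := hp
  fin_cases i <;> simp only <;> linarith! [h 0, h 1, h 2]

/-- The normalised message at a vertex whose children send the messages `p`. -/
noncomputable def normMessage {d : ℕ} (b : ℝ) (p : Fin d → Fin 3 → ℝ) (c : Fin 3) : ℝ :=
  message b p c / (message b p 0 + message b p 1 + message b p 2)

lemma message_pos {d : ℕ} {b : ℝ} {p : Fin d → Fin 3 → ℝ} (hb : 0 ≤ b) (hb1 : b < 1)
    (hp : ∀ k, IsProb (p k)) (c : Fin 3) : 0 < message b p c :=
  Finset.prod_pos fun k _ => by nlinarith [(hp k).le_one c, (hp k).1 c]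

lemma isProb_normMessage {d : ℕ} {b : ℝ} {p : Fin d → Fin 3 → ℝ} (hb : 0 ≤ b) (hb1 : b < 1)
    (hp : ∀ k, IsProb (p k)) : IsProb (normMessage b p) := by
  have h := message_pos hb hb1 hp
  have h0 := h 0
  have h1 := h 1
  have h2 := h 2
  constructor
  · intro i
    have := h i
    unfold normMessage
    positivity
  · unfold normMessage
    field_simp

/-- The contraction map of the two-step recursion, in terms of `τ = l T / d`. -/
noncomputable def stepMap (d : ℕ) (t : ℝ) : ℝ :=
  ((1 + t) ^ d - (1 - t) ^ d) / ((1 + t) ^ d + (1 - t) ^ d)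

lemma stepMap_nonneg {d : ℕ} {t : ℝ} (ht : 0 ≤ t) (ht1 : t < 1) : 0 ≤ stepMap d t := by
  have h : (1 - t) ^ d ≤ (1 + t) ^ d := by
    gcongr
    linarith
  have h1 : 0 < (1 - t) ^ d := pow_pos (by linarith) d
  exact div_nonneg (by linarith) (by linarith)

lemma balanced_normMessage_of_ratio {d : ℕ} {b t : ℝ} {p : Fin d → Fin 3 → ℝ} (hb : 0 ≤ b)
    (hb1 : b < 1) (ht : 0 ≤ t) (ht1 : t < 1) (hp : ∀ k, IsProb (p k))
    (h : ∀ k i j, i ≠ j → (1 - t) * (1 - b * p k i) ≤ (1 + t) * (1 - b * p k j)) :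
    Balanced (stepMap d t) (normMessage b p) := by
  intro i j
  have hm := message_pos hb hb1 hp
  have hS : 0 < message b p 0 + message b p 1 + message b p 2 := by
    linarith [hm 0, hm 1, hm 2]
  have hpos : 0 < (1 + t) ^ d + (1 - t) ^ d := by
    have h1 : 0 < (1 - t) ^ d := pow_pos (by linarith) d
    have h2 : 0 < (1 + t) ^ d := pow_pos (by linarith) d
    linarith
  by_cases hij : i = j
  · subst hij
    have := (isProb_normMessage hb hb1 hp).1 i
    have := mul_nonneg (stepMap_nonneg (d := d) ht ht1) (add_nonneg this this)
    linarith
  have hprod : (1 - t) ^ d * message b p i ≤ (1 + t) ^ d * message b p j := by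
    have e : ∀ x : ℝ, x ^ d = ∏ _k : Fin d, x := by intro x; simp
    rw [e, e, message, message, ← Finset.prod_mul_distrib, ← Finset.prod_mul_distrib]
    refine Finset.prod_le_prod (fun k _ => mul_nonneg (by linarith) ?_) fun k _ => h k i j hij
    nlinarith [(hp k).le_one i, (hp k).1 i]
  have hmain : message b p i - message b p j ≤ stepMap d t * (message b p i + message b p j) := by
    rw [stepMap, div_mul_eq_mul_div, le_div_iff₀ hpos]
    linarith
  unfold normMessage
  rw [← sub_div, ← add_div, ← mul_div_assoc]
  exact div_le_div_of_nonneg_right hmain hS.le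

lemma exists_third (i j : Fin 3) (h : i ≠ j) :
    ∃ k, ∀ f : Fin 3 → ℝ, f i + f j + f k = f 0 + f 1 + f 2 := by
  have key : ∃ k : Fin 3, k ≠ i ∧ k ≠ j := by
    revert i j
    decide
  obtain ⟨k, hki, hkj⟩ := key
  refine ⟨k, fun f => ?_⟩
  rw [← Fin.sum_univ_three f]
  have hu : (Finset.univ : Finset (Fin 3)) = {i, j, k} := by
    revert i j k
    decide
  rw [hu, Finset.sum_insert (by simp [h, hki.symm]), Finset.sum_insert (by simp [hkj.symm]),
    Finset.sum_singleton, add_assoc]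

lemma balanced_two_step {d : ℕ} {b b' T l : ℝ} (hd : 0 < d) (hbd : d * b = 3 - b)
    (hb1 : b ≤ 1) (hb' : 0 ≤ b') (hb1' : b' < 1) (hbb : b' ≤ b) (hT : 0 < T) (hT1 : T ≤ 1)
    (hl : 0 ≤ l) (hlT : l * T < d) (hE : ExtremalIneq d (3 - b) b T l)
    {p : Fin d → Fin d → Fin 3 → ℝ} (hp : ∀ j k, IsProb (p j k))
    (hbal : ∀ j k, Balanced T (p j k)) :
    Balanced (stepMap d (l * T / d)) (normMessage b' fun j => normMessage b' (p j)) := by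
  have hd' : (0 : ℝ) < d := by exact_mod_cast hd
  have hb : 0 < b := by nlinarith
  have hlT0 : 0 ≤ l * T := mul_nonneg hl hT.le
  refine balanced_normMessage_of_ratio hb' hb1' (by positivity) ((div_lt_one hd').2 hlT)
    (fun j => isProb_normMessage hb' hb1' (hp j)) ?_
  intro j c₁ c₂ hc
  obtain ⟨c₃, hc₃⟩ := exists_third c₁ c₂ hc
  have hm := message_pos hb' hb1' (hp j)
  have key := message_ineq_of_extremal hb hb1 hb' hbb hT hT1 hl hE (fun k => (hp j k).1)
    (hbal j) (c₁ := c₁) (c₂ := c₂) (c₃ := c₃) (fun k => by rw [hc₃, (hp j k).2])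
  have hS := hc₃ (message b' (p j))
  have hr₁ := hm c₁
  have hr₂ := hm c₂
  have hr₃ := hm c₃
  unfold normMessage
  rw [← hS]
  set r₁ := message b' (p j) c₁
  set r₂ := message b' (p j) c₂
  set r₃ := message b' (p j) c₃
  have hR : b' * ((2 - b) * (r₁ + r₂) + 2 * r₃) ≤ b * ((2 - b') * (r₁ + r₂) + 2 * r₃) := by
    nlinarith
  have hkey : d * (b' * (r₂ - r₁)) ≤ l * T * ((2 - b') * (r₁ + r₂) + 2 * r₃) := by
    refine le_of_mul_le_mul_left ?_ hb
    have h1 := mul_le_mul_of_nonneg_left key hb'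
    have h2 := mul_le_mul_of_nonneg_left hR hlT0
    rw [← hbd] at h1
    linarith
  have hkey' : b' * (r₂ - r₁) ≤ l * T / d * ((2 - b') * (r₁ + r₂) + 2 * r₃) := by
    rw [div_mul_eq_mul_div, le_div_iff₀ hd']
    linarith
  have hS' : 0 < r₁ + r₂ + r₃ := by positivity
  have e : ∀ r : ℝ, 1 - b' * (r / (r₁ + r₂ + r₃)) =
      (r₁ + r₂ + r₃ - b' * r) / (r₁ + r₂ + r₃) := by
    intro r
    field_simp
  rw [e, e, ← mul_div_assoc, ← mul_div_assoc]
  refine div_le_div_of_nonneg_right ?_ hS'.le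
  linarith

lemma extremalIneq_two {T : ℝ} (hT : 0 ≤ T) (hT1 : T ≤ 2 / 3) : ExtremalIneq 2 2 1 T 1 := by
  intro g
  simp only [Fin.prod_univ_two]
  generalize g 0 = x
  generalize g 1 = y
  have h1 : 0 ≤ T * T := mul_nonneg hT hT
  have h2 : 0 ≤ T * (2 / 3 - T) := mul_nonneg hT (by linarith)
  have h3 : 0 ≤ T * T * (2 / 3 - T) := mul_nonneg h1 (by linarith)
  have h4 : 0 ≤ T * T * T := mul_nonneg h1 hT
  fin_cases x <;> fin_cases y <;> simp [extremal] <;> linarith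

lemma extremalIneq_three {T : ℝ} (hT : 0 ≤ T) (hT1 : T ≤ 1) :
    ExtremalIneq 3 (9 / 4) (3 / 4) T (1 + T ^ 2 / 4) := by
  intro g
  simp only [Fin.prod_univ_three]
  generalize g 0 = x
  generalize g 1 = y
  generalize g 2 = z
  have hS : 0 ≤ 1 - T := by linarith
  have h0 : 0 ≤ T * (1 - T) ^ 5 := by positivity
  have h1 : 0 ≤ T ^ 2 * (1 - T) ^ 4 := by positivity
  have h2 : 0 ≤ T ^ 3 * (1 - T) ^ 3 := by positivity
  have h3 : 0 ≤ T ^ 4 * (1 - T) ^ 2 := by positivity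
  have h4 : 0 ≤ T ^ 5 * (1 - T) := by positivity
  have h5 : 0 ≤ T ^ 6 := by positivity
  fin_cases x <;> fin_cases y <;> fin_cases z <;> simp [extremal] <;> linarith

lemma log_ratio_le {s : ℝ} (hs : 0 ≤ s) (hs1 : s ^ 2 ≤ 1 / 5) :
    Real.log ((1 + s) / (1 - s)) ≤ 2 * s * (1 + s ^ 2 / (3 * (1 - s ^ 2))) := by
  have hlt : s < 1 := by nlinarith
  have h := Real.log_div_le_sum_range_add hs hlt 4
  have hx : 0 < 1 - s ^ 2 := by linarith
  have key : (∑ i ∈ Finset.range 4, s ^ (2 * i + 1) / (2 * (i : ℝ) + 1)) +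
      s ^ (2 * 4 + 1) / (1 - s ^ 2) ≤ s * (1 + s ^ 2 / (3 * (1 - s ^ 2))) := by
    have e : s * (1 + s ^ 2 / (3 * (1 - s ^ 2))) -
        ((∑ i ∈ Finset.range 4, s ^ (2 * i + 1) / (2 * (i : ℝ) + 1)) +
          s ^ (2 * 4 + 1) / (1 - s ^ 2)) =
        s ^ 5 * (1 / 3 - (1 - s ^ 2) * (1 / 5 + s ^ 2 / 7) - s ^ 4) / (1 - s ^ 2) := by
      simp only [Finset.sum_range_succ, Finset.sum_range_zero]
      field_simp
      push_cast
      ring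
    have h2 : 0 ≤ 1 / 3 - (1 - s ^ 2) * (1 / 5 + s ^ 2 / 7) - s ^ 4 := by
      nlinarith [sq_nonneg s]
    have h3 : 0 ≤ s ^ 5 * (1 / 3 - (1 - s ^ 2) * (1 / 5 + s ^ 2 / 7) - s ^ 4) / (1 - s ^ 2) := by
      positivity
    linarith
  linarith

lemma sub_sq_le_log_one_add {u : ℝ} (hu : 0 ≤ u) : u - u ^ 2 / 2 ≤ Real.log (1 + u) := by
  refine le_trans ?_ (Real.le_log_one_add_of_nonneg hu)
  rw [le_div_iff₀ (by linarith)]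
  nlinarith [pow_nonneg hu 3]

/-- Elementary comparison of the products `∏ (1 + x)` and `∏ (1 - x)` with the sum `∑ x`. -/
lemma prod_comparison {ι : Type*} (s : Finset ι) (x : ι → ℝ) (hx : ∀ i, 0 ≤ x i) :
    0 ≤ ∏ i ∈ s, (1 + x i) - ∏ i ∈ s, (1 - x i) ∧
    2 ≤ ∏ i ∈ s, (1 - x i) + ∏ i ∈ s, (1 + x i) ∧
    ∏ i ∈ s, (1 + x i) - ∏ i ∈ s, (1 - x i) ≤
      (∑ i ∈ s, x i) * (∏ i ∈ s, (1 - x i) + ∏ i ∈ s, (1 + x i)) ∧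
    2 * (∏ i ∈ s, (1 - x i) + ∏ i ∈ s, (1 + x i) - 2) ≤
      (∑ i ∈ s, x i) * (∏ i ∈ s, (1 + x i) - ∏ i ∈ s, (1 - x i)) ∧
    ∏ i ∈ s, (1 + x i) - ∏ i ∈ s, (1 - x i) - 2 * ∑ i ∈ s, x i ≤
      (∑ i ∈ s, x i) / 3 * (∏ i ∈ s, (1 - x i) + ∏ i ∈ s, (1 + x i) - 2) := by
  classical
  induction s using Finset.induction_on with
  | empty => norm_num
  | insert a s ha ih =>
    rw [Finset.prod_insert ha, Finset.prod_insert ha, Finset.sum_insert ha]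
    obtain ⟨h1, h2, h3, h4, h5⟩ := ih
    have hE : 0 ≤ ∑ i ∈ s, x i := Finset.sum_nonneg fun i _ => hx i
    have hxa := hx a
    set E := ∑ i ∈ s, x i
    set y := x a
    have eD : (1 + y) * ∏ i ∈ s, (1 + x i) - (1 - y) * ∏ i ∈ s, (1 - x i) =
        (∏ i ∈ s, (1 + x i) - ∏ i ∈ s, (1 - x i)) +
          y * (∏ i ∈ s, (1 - x i) + ∏ i ∈ s, (1 + x i)) := by ring
    have eR : (1 - y) * ∏ i ∈ s, (1 - x i) + (1 + y) * ∏ i ∈ s, (1 + x i) =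
        (∏ i ∈ s, (1 - x i) + ∏ i ∈ s, (1 + x i)) +
          y * (∏ i ∈ s, (1 + x i) - ∏ i ∈ s, (1 - x i)) := by ring
    rw [eD, eR]
    set D := ∏ i ∈ s, (1 + x i) - ∏ i ∈ s, (1 - x i)
    set R := ∏ i ∈ s, (1 - x i) + ∏ i ∈ s, (1 + x i)
    have a1 : 0 ≤ y * D := mul_nonneg hxa h1
    have a2 : 0 ≤ y * R := mul_nonneg hxa (by linarith)
    have a3 := mul_le_mul_of_nonneg_left h3 hxa
    have a4 := mul_le_mul_of_nonneg_left h4 hxa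
    have a5 : 0 ≤ (y + E) * (y * D) := mul_nonneg (by linarith) a1
    have a6 : 0 ≤ y * (y * R) := mul_nonneg hxa a2
    have a7 : 0 ≤ y * (y * D) := mul_nonneg hxa a1
    refine ⟨by linarith, by linarith, ?_, ?_, ?_⟩ <;> nlinarith

/-- The product inequality for `d` children, given a bound for each child. -/
lemma prod_ineq_of_child_bound {d : ℕ} {N T l : ℝ} {x y : Fin d → ℝ} (hN : 12 / 5 ≤ N)
    (hT : 0 < T) (hT1 : T ≤ 1) (hl : 1 ≤ l) (hx : ∀ k, 0 ≤ x k) (hy : ∀ k, 0 < y k)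
    (hxs : ∀ k, d * x k ≤ N * T / (N - T))
    (hxy : ∀ k, d * (N * x k / T - Real.log (y k)) ≤ N + (l - 1) * (N - 1) + Real.log l) :
    N * (∏ k, (1 + x k) - ∏ k, (1 - x k)) ≤
      l * T * ((N - 1) * (∏ k, (1 - x k) + ∏ k, (1 + x k)) + 2 * ∏ k, y k) := by
  obtain ⟨-, hR, -, -, hD⟩ := prod_comparison Finset.univ x hx
  set E := ∑ k, x k with hE
  set r₀ := ∏ k, (1 - x k)
  set r₁ := ∏ k, (1 + x k)
  rcases Nat.eq_zero_or_pos d with rfl | hd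
  · simp [r₀, r₁]
    have : 0 ≤ l * T := by positivity
    nlinarith
  have hd' : (0 : ℝ) < d := by exact_mod_cast hd
  have hEle : E ≤ N * T / (N - T) := by
    have h1 : ∀ k ∈ Finset.univ, x k ≤ N * T / (N - T) / d := by
      intro k _
      rw [le_div_iff₀ hd']
      linarith [hxs k]
    have h2 := Finset.sum_le_card_nsmul Finset.univ x _ h1
    simp only [Finset.card_univ, Fintype.card_fin, nsmul_eq_mul] at h2
    rwa [mul_div_cancel₀ _ hd'.ne'] at h2
  have hfirst : N * E / 3 ≤ l * T * (N - 1) := by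
    have h1 : N * T / (N - T) ≤ N * T / (N - 1) := by
      have : 0 < N - 1 := by linarith
      gcongr
    have h2 : N * (N * T / (N - 1)) ≤ 3 * (T * (N - 1)) := by
      rw [← mul_div_assoc, div_le_iff₀ (by linarith)]
      have : N * N ≤ 3 * ((N - 1) * (N - 1)) := by nlinarith
      nlinarith [mul_le_mul_of_nonneg_left this hT.le]
    have h3 : N * E ≤ N * (N * T / (N - 1)) :=
      mul_le_mul_of_nonneg_left (hEle.trans h1) (by linarith)
    have h4 : 0 ≤ (l - 1) * (T * (N - 1)) :=
      mul_nonneg (by linarith) (mul_nonneg hT.le (by linarith))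
    nlinarith
  have hprod : 0 < ∏ k, y k := Finset.prod_pos fun k _ => hy k
  have hsecond : N * E ≤ l * T * (N - 1 + ∏ k, y k) := by
    have hlog : Real.log (l * ∏ k, y k) = Real.log l + ∑ k, Real.log (y k) := by
      rw [Real.log_mul (by linarith) hprod.ne', Real.log_prod fun k _ => (hy k).ne']
    have h1 := Real.log_le_sub_one_of_pos (mul_pos (by linarith : 0 < l) hprod)
    have h2 : N * E / T - ∑ k, Real.log (y k) ≤ N + (l - 1) * (N - 1) + Real.log l := by
      have e : N * E / T - ∑ k, Real.log (y k) = ∑ k, (N * x k / T - Real.log (y k)) := by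
        rw [Finset.sum_sub_distrib, hE, Finset.mul_sum, Finset.sum_div]
      have h3 : ∀ k ∈ Finset.univ, N * x k / T - Real.log (y k) ≤
          (N + (l - 1) * (N - 1) + Real.log l) / d := by
        intro k _
        rw [le_div_iff₀ hd']
        linarith [hxy k]
      have h4 := Finset.sum_le_card_nsmul Finset.univ _ _ h3
      simp only [Finset.card_univ, Fintype.card_fin, nsmul_eq_mul] at h4
      rwa [mul_div_cancel₀ _ hd'.ne', ← e] at h4
    rw [hlog] at h1
    have h5 : N * E / T ≤ l * (N - 1 + ∏ k, y k) := by linarith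
    rw [div_le_iff₀ hT] at h5
    linarith
  have h6 := mul_le_mul_of_nonneg_left hD (by linarith : 0 ≤ N)
  have h7 := mul_le_mul_of_nonneg_right hfirst (by linarith : 0 ≤ r₀ + r₁ - 2)
  linarith

section ChildBounds

variable {d : ℕ} {b T : ℝ}

lemma child_bound_left (hb : 0 < b) (hb1 : b ≤ 3 / 5) (hbd : d * b = 3 - b) (hT : 0 < T)
    (hT1 : T ≤ 1) :
    d * ((3 - b) * (b * T / (3 - b - T)) / T - Real.log (1 + b * T / (3 - b - T))) ≤
      3 - b + 2 / 5 * T ^ 2 := by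
  have hM : 7 / 5 ≤ 3 - b - T := by linarith
  have hM0 : 0 < 3 - b - T := by linarith
  set s := b * T / (3 - b - T) with hs
  have hs0 : 0 ≤ s := by positivity
  have hd : (0 : ℝ) ≤ d := Nat.cast_nonneg d
  have hlog := Real.le_log_one_add_of_nonneg hs0
  have hlog' : s - s ^ 2 / 2 ≤ Real.log (1 + s) := sub_sq_le_log_one_add hs0
  have e : (3 - b) * s / T = b + s := by
    rw [hs]
    field_simp
    ring
  have e2 : d * s ^ 2 ≤ 4 / 5 * T ^ 2 := by
    have : d * s ^ 2 = (3 - b) * b * T ^ 2 / (3 - b - T) ^ 2 := by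
      rw [hs, div_pow, ← mul_div_assoc, ← hbd]
      ring
    rw [this, div_le_iff₀ (by positivity)]
    have h1 : (3 - b) * b ≤ 36 / 25 := by nlinarith
    have h2 : 36 / 25 ≤ 4 / 5 * (3 - b - T) ^ 2 := by nlinarith
    nlinarith [mul_le_mul_of_nonneg_left (h1.trans h2) (sq_nonneg T)]
  rw [e]
  have := mul_le_mul_of_nonneg_left hlog' hd
  linarith

lemma child_bound_mid (hb : 0 < b) (hb1 : b ≤ 3 / 5) (hbd : d * b = 3 - b) (hT : 0 < T)
    (hT1 : T ≤ 1) :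
    d * ((3 - b) * (b * T / (3 - b + T)) / T - Real.log (1 - b * T / (3 - b + T))) ≤
      3 - b + 2 / 5 * T ^ 2 := by
  have hM : 12 / 5 ≤ 3 - b + T := by linarith
  have hM0 : 0 < 3 - b + T := by linarith
  have hd : (0 : ℝ) ≤ d := Nat.cast_nonneg d
  have ht1 : b * T / (3 - b + T) ≤ 1 / 4 := by
    rw [div_le_iff₀ hM0]
    nlinarith
  have e2 : d * (b * T / (3 - b + T)) ^ 2 ≤ 1 / 4 * T ^ 2 := by
    have : d * (b * T / (3 - b + T)) ^ 2 = (3 - b) * b * T ^ 2 / (3 - b + T) ^ 2 := by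
      rw [div_pow, ← mul_div_assoc, ← hbd]
      ring
    rw [this, div_le_iff₀ (by positivity)]
    have h1 : (3 - b) * b ≤ 36 / 25 := by nlinarith
    have h2 : 36 / 25 ≤ 1 / 4 * (3 - b + T) ^ 2 := by nlinarith
    nlinarith [mul_le_mul_of_nonneg_left (h1.trans h2) (sq_nonneg T)]
  have e : (3 - b) * (b * T / (3 - b + T)) / T = b - b * T / (3 - b + T) := by
    field_simp
    ring
  rw [e]
  have ht0 : 0 ≤ b * T / (3 - b + T) := by positivity
  generalize b * T / (3 - b + T) = t at *
  have hlog := Real.one_sub_inv_le_log_of_pos (show 0 < 1 - t by linarith)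
  have hinv : (1 - t)⁻¹ ≤ 1 + t + 4 / 3 * t ^ 2 := by
    rw [inv_le_iff_one_le_mul₀ (by linarith)]
    nlinarith [mul_nonneg (sq_nonneg t) (sub_nonneg.2 ht1)]
  have : b - t - Real.log (1 - t) ≤ b + 4 / 3 * t ^ 2 := by linarith
  have := mul_le_mul_of_nonneg_left this hd
  nlinarith [sq_nonneg T]

lemma child_bound_right (hb : 0 < b) (hb1 : b ≤ 3 / 5) (hbd : d * b = 3 - b) (hT : 0 < T)
    (hT1 : T ≤ 1) {u : ℝ} (hu : u = T ^ 2 / 5 + 9 * T ^ 4 / 20) :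
    d * (-Real.log ((1 - b * T / (3 - b - T)) / (1 + b * T / (3 - b - T)))) ≤
      3 - b + u * (3 - b - 1) + (u - u ^ 2 / 2) := by
  have hM : 7 / 5 ≤ 3 - b - T := by linarith
  have hM0 : 0 < 3 - b - T := by linarith
  have hM1 : 0 < 12 / 5 - T := by linarith
  have hd : (0 : ℝ) ≤ d := Nat.cast_nonneg d
  have hu0 : 0 ≤ u := by rw [hu]; positivity
  set s := b * T / (3 - b - T) with hs
  have hs0 : 0 ≤ s := by positivity
  have hsσ : s ≤ 3 / 5 * T / (12 / 5 - T) := by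
    rw [hs]
    gcongr
    linarith
  have hσ : 3 / 5 * T / (12 / 5 - T) ≤ 3 / 7 := by
    rw [div_le_iff₀ hM1]
    linarith
  have hs2 : s ^ 2 ≤ 1 / 5 := by nlinarith
  have hlog := log_ratio_le hs0 hs2
  rw [← Real.log_inv, inv_div]
  have e1 : d * (2 * s) ≤ 24 / 5 * T / (12 / 5 - T) := by
    have : d * (2 * s) = 2 * (3 - b) * T / (3 - b - T) := by
      rw [hs, ← hbd]
      ring
    rw [this, div_le_div_iff₀ hM0 hM1]
    nlinarith [mul_nonneg (sq_nonneg T) (sub_nonneg.2 hb1)]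
  have hq : 0 < (3 / 2 - T) * (6 - T) := mul_pos (by linarith) (by linarith)
  have e2 : s ^ 2 / (3 * (1 - s ^ 2)) ≤ 3 / 16 * T ^ 2 / ((3 / 2 - T) * (6 - T)) := by
    have hσ2 : s ^ 2 * (12 / 5 - T) ^ 2 ≤ 9 / 25 * T ^ 2 := by
      have h1 := pow_le_pow_left₀ (mul_nonneg hs0 hM1.le) ((le_div_iff₀ hM1).1 hsσ) 2
      linarith
    rw [div_le_div_iff₀ (by linarith) hq]
    nlinarith
  have e3 : d * Real.log ((1 + s) / (1 - s)) ≤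
      24 / 5 * T / (12 / 5 - T) * (1 + 3 / 16 * T ^ 2 / ((3 / 2 - T) * (6 - T))) := by
    have h1 := mul_le_mul_of_nonneg_left hlog hd
    have h2 : 0 ≤ s ^ 2 / (3 * (1 - s ^ 2)) :=
      div_nonneg (sq_nonneg s) (by linarith)
    have h3 := mul_le_mul e1 (add_le_add_right e2 1) (by linarith) (by positivity)
    linarith
  refine e3.trans ?_
  have e4 : 24 / 5 * T / (12 / 5 - T) * (1 + 3 / 16 * T ^ 2 / ((3 / 2 - T) * (6 - T))) ≤
      12 / 5 + u * (12 / 5) - u ^ 2 / 2 := by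
    have : 24 / 5 * T / (12 / 5 - T) * (1 + 3 / 16 * T ^ 2 / ((3 / 2 - T) * (6 - T))) =
        24 / 5 * T * ((3 / 2 - T) * (6 - T) + 3 / 16 * T ^ 2) /
          ((12 / 5 - T) * ((3 / 2 - T) * (6 - T))) := by
      rw [one_add_div hq.ne', div_mul_div_comm]
    rw [this, div_le_iff₀ (mul_pos hM1 hq), hu]
    have hS : 0 ≤ 1 - T := by linarith
    have b0 : 0 ≤ (1 - T) ^ 11 := by positivity
    have b1 : 0 ≤ T * (1 - T) ^ 10 := by positivity
    have b2 : 0 ≤ T ^ 2 * (1 - T) ^ 9 := by positivity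
    have b3 : 0 ≤ T ^ 3 * (1 - T) ^ 8 := by positivity
    have b4 : 0 ≤ T ^ 4 * (1 - T) ^ 7 := by positivity
    have b5 : 0 ≤ T ^ 5 * (1 - T) ^ 6 := by positivity
    have b6 : 0 ≤ T ^ 6 * (1 - T) ^ 5 := by positivity
    have b7 : 0 ≤ T ^ 7 * (1 - T) ^ 4 := by positivity
    have b8 : 0 ≤ T ^ 8 * (1 - T) ^ 3 := by positivity
    have b9 : 0 ≤ T ^ 9 * (1 - T) ^ 2 := by positivity
    have b10 : 0 ≤ T ^ 10 * (1 - T) := by positivity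
    have b11 : 0 ≤ T ^ 11 := by positivity
    linarith
  refine e4.trans ?_
  nlinarith

end ChildBounds

lemma extremalIneq_of_four_le {d : ℕ} {b T : ℝ} (hb : 0 < b) (hb1 : b ≤ 3 / 5)
    (hbd : d * b = 3 - b) (hT : 0 < T) (hT1 : T ≤ 1) :
    ExtremalIneq d (3 - b) b T (1 + (T ^ 2 / 5 + 9 * T ^ 4 / 20)) := by
  intro g
  set u := T ^ 2 / 5 + 9 * T ^ 4 / 20 with hu
  have hM : 0 < 3 - b - T := by linarith
  have hM' : 0 < 3 - b + T := by linarith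
  have hd : (0 : ℝ) ≤ d := Nat.cast_nonneg d
  have hs0 : 0 ≤ b * T / (3 - b - T) := by positivity
  have ht0 : 0 ≤ b * T / (3 - b + T) := by positivity
  have hs1 : b * T / (3 - b - T) < 1 := by
    rw [div_lt_one hM]
    nlinarith
  have ht1 : b * T / (3 - b + T) < 1 := by
    rw [div_lt_one hM']
    nlinarith
  have hu0 : 0 ≤ u := by positivity
  have hu1 : u ≤ 13 / 20 := by
    have : T ^ 2 ≤ 1 := pow_le_one₀ hT.le hT1
    have : T ^ 4 ≤ 1 := pow_le_one₀ hT.le hT1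
    linarith
  have hlog := sub_sq_le_log_one_add hu0
  have hK : 3 - b + 2 / 5 * T ^ 2 ≤ 3 - b + u * (3 - b - 1) + (u - u ^ 2 / 2) := by
    have h1 : T ^ 2 / 5 ≤ u := by
      have : 0 ≤ 9 * T ^ 4 / 20 := by positivity
      linarith
    nlinarith
  have e : ∀ i, extremal (3 - b) b T i 0 =
        ![3 - b - T, 3 - b + T, 3 - b - T + b * T] i *
          (1 - ![b * T / (3 - b - T), b * T / (3 - b + T), 0] i) ∧
      extremal (3 - b) b T i 1 =
        ![3 - b - T, 3 - b + T, 3 - b - T + b * T] i *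
          (1 + ![b * T / (3 - b - T), b * T / (3 - b + T), 0] i) ∧
      extremal (3 - b) b T i 2 =
        ![3 - b - T, 3 - b + T, 3 - b - T + b * T] i *
          ![1 + b * T / (3 - b - T), 1 - b * T / (3 - b + T),
            (1 - b * T / (3 - b - T)) / (1 + b * T / (3 - b - T))] i := by
    have h3 : 0 < 3 - b - T + b * T := by positivity
    intro i
    fin_cases i
    · refine ⟨?_, ?_, ?_⟩ <;> simp [extremal] <;> field_simp
    · refine ⟨?_, ?_, ?_⟩ <;> simp [extremal] <;> field_simp
    · refine ⟨?_, ?_, ?_⟩ <;> simp [extremal]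
      field_simp
  have hm : ∀ i, 0 < ![3 - b - T, 3 - b + T, 3 - b - T + b * T] i := by
    have h3 : 0 < 3 - b - T + b * T := by positivity
    intro i
    fin_cases i <;> simp <;> linarith
  simp only [fun i => (e i).1, fun i => (e i).2.1, fun i => (e i).2.2, Finset.prod_mul_distrib]
  have hP := Finset.prod_pos (s := Finset.univ) fun k (_ : k ∈ Finset.univ) => hm (g k)
  have key := prod_ineq_of_child_bound (d := d) (N := 3 - b) (T := T) (l := 1 + u)
    (x := fun k => ![b * T / (3 - b - T), b * T / (3 - b + T), 0] (g k))
    (y := fun k => ![1 + b * T / (3 - b - T), 1 - b * T / (3 - b + T),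
            (1 - b * T / (3 - b - T)) / (1 + b * T / (3 - b - T))] (g k))
    (by linarith) hT hT1 (by linarith) ?_ ?_ ?_ ?_
  · have := mul_le_mul_of_nonneg_left key hP.le
    linarith
  · intro k
    generalize g k = i
    fin_cases i <;> simp <;> assumption
  · intro k
    generalize g k = i
    fin_cases i
    · simp
      linarith
    · simp
      linarith
    · simp
      have : 0 < 1 - b * T / (3 - b - T) := by linarith
      positivity
  · intro k
    generalize g k = i
    have h0 : d * (b * T / (3 - b - T)) = (3 - b) * T / (3 - b - T) := by
      rw [← hbd]
      ring
    fin_cases i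
    · simp
      linarith
    · simp
      rw [← h0]
      have : b * T / (3 - b + T) ≤ b * T / (3 - b - T) := by
        gcongr
        linarith
      exact mul_le_mul_of_nonneg_left this hd
    · simp
      rw [← h0]
      positivity
  · intro k
    generalize g k = i
    have e1 : (1 + u - 1) * (3 - b - 1) = u * (3 - b - 1) := by ring
    rw [e1]
    fin_cases i
    · have := child_bound_left hb hb1 hbd hT hT1
      simp
      linarith
    · have := child_bound_mid hb hb1 hbd hT hT1
      simp
      linarith
    · have := child_bound_right hb hb1 hbd hT hT1 hu
      simp at this ⊢
      linarith

lemma stepMap_lt {d : ℕ} {φ φ' : ℝ → ℝ} (hd : 0 < d) (hφ : ∀ T, HasDerivAt φ (φ' T) T)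
    (h0 : φ 0 = 0) (hpos : ∀ T ∈ Set.Ico (0 : ℝ) 1, 0 ≤ φ T)
    (hlt : ∀ T ∈ Set.Ico (0 : ℝ) 1, φ T < d)
    (hder : ∀ T ∈ Set.Ioo (0 : ℝ) 1, φ' T * (1 - T ^ 2) < 1 - (φ T / d) ^ 2)
    {T : ℝ} (hT : T ∈ Set.Ioo (0 : ℝ) 1) : stepMap d (φ T / d) < T := by
  have hd' : (0 : ℝ) < d := by exact_mod_cast hd
  have hτ0 : ∀ T ∈ Set.Ico (0 : ℝ) 1, 0 ≤ φ T / d := fun T hT => div_nonneg (hpos T hT) hd'.le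
  have hτ1 : ∀ T ∈ Set.Ico (0 : ℝ) 1, φ T / d < 1 := fun T hT => (div_lt_one hd').2 (hlt T hT)
  set ψ : ℝ → ℝ := fun T => Real.log (1 + T) - Real.log (1 - T) -
    d * (Real.log (1 + φ T / d) - Real.log (1 - φ T / d)) with hψ
  have hψ' : ∀ T ∈ Set.Ico (0 : ℝ) 1, HasDerivAt ψ
      (1 / (1 + T) - (-1) / (1 - T) -
        d * (φ' T / d / (1 + φ T / d) - (-(φ' T / d)) / (1 - φ T / d))) T := by
    intro T hT
    have h1 : 0 < 1 + T := by linarith [hT.1]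
    have h2 : 0 < 1 - T := by linarith [hT.2]
    have h3 : 0 < 1 + φ T / d := by linarith [hτ0 T hT]
    have h4 : 0 < 1 - φ T / d := by linarith [hτ1 T hT]
    have d1 := ((hasDerivAt_id T).const_add 1).log h1.ne'
    have d2 := ((hasDerivAt_id T).const_sub 1).log h2.ne'
    have d3 := (((hφ T).div_const d).const_add 1).log h3.ne'
    have d4 := (((hφ T).div_const d).const_sub 1).log h4.ne'
    exact (d1.sub d2).sub ((d3.sub d4).const_mul (d : ℝ))
  have hmono : StrictMonoOn ψ (Set.Ico 0 1) := by
    refine strictMonoOn_of_deriv_pos (convex_Ico 0 1)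
      (fun T hT => (hψ' T hT).continuousAt.continuousWithinAt) ?_
    intro T hT
    rw [interior_Ico] at hT
    have hT' : T ∈ Set.Ico (0 : ℝ) 1 := ⟨hT.1.le, hT.2⟩
    rw [(hψ' T hT').deriv]
    have h1 : 0 < 1 + T := by linarith [hT.1]
    have h2 : 0 < 1 - T := by linarith [hT.2]
    have h3 : 0 < 1 + φ T / d := by linarith [hτ0 T hT']
    have h4 : 0 < 1 - φ T / d := by linarith [hτ1 T hT']
    have e : 1 / (1 + T) - (-1) / (1 - T) -
        d * (φ' T / d / (1 + φ T / d) - (-(φ' T / d)) / (1 - φ T / d)) =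
        2 * (1 - (φ T / d) ^ 2 - φ' T * (1 - T ^ 2)) /
          ((1 + T) * (1 - T) * ((1 + φ T / d) * (1 - φ T / d))) := by
      have e1 : d * (φ' T / d / (1 + φ T / d) - (-(φ' T / d)) / (1 - φ T / d)) =
          φ' T / (1 + φ T / d) + φ' T / (1 - φ T / d) := by
        generalize φ T / d = y at *
        field_simp
        ring
      rw [e1]
      generalize φ T / d = y at *
      field_simp
      ring
    rw [e]
    have := hder T hT
    have : 0 < 1 - (φ T / d) ^ 2 - φ' T * (1 - T ^ 2) := by linarith
    positivity
  have hT' : T ∈ Set.Ico (0 : ℝ) 1 := ⟨hT.1.le, hT.2⟩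
  have hpos' : 0 < ψ T := by
    have := hmono (show (0 : ℝ) ∈ Set.Ico (0 : ℝ) 1 by simp) hT' hT.1
    simpa [hψ, h0] using this
  have h1 : 0 < 1 + T := by linarith [hT'.1]
  have h2 : 0 < 1 - T := by linarith [hT'.2]
  have h3 : 0 < 1 + φ T / d := by linarith [hτ0 T hT']
  have h4 : 0 < 1 - φ T / d := by linarith [hτ1 T hT']
  have hprod : (1 + φ T / d) ^ d * (1 - T) < (1 + T) * (1 - φ T / d) ^ d := by
    rw [← Real.log_lt_log_iff (by positivity) (by positivity), Real.log_mul (by positivity) h2.ne',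
      Real.log_mul h1.ne' (by positivity), Real.log_pow, Real.log_pow]
    simp only [hψ] at hpos'
    linarith
  rw [stepMap, div_lt_iff₀ (by positivity)]
  linarith

lemma continuousAt_stepMap {d : ℕ} {t : ℝ} (ht : 0 ≤ t) (ht1 : t < 1) :
    ContinuousAt (stepMap d) t := by
  have h1 : 0 < (1 - t) ^ d := pow_pos (by linarith) d
  have h2 : 0 < (1 + t) ^ d := pow_pos (by linarith) d
  unfold stepMap
  refine ContinuousAt.div (by fun_prop) (by fun_prop) (by linarith)

/-- The factor by which two messages may be further from uniform than the linearised bound. -/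
noncomputable def slack (d : ℕ) (T : ℝ) : ℝ :=
  if d = 2 then 1 else if d = 3 then 1 + T ^ 2 / 4 else 1 + (T ^ 2 / 5 + 9 * T ^ 4 / 20)

lemma one_le_slack (d : ℕ) (T : ℝ) : 1 ≤ slack d T := by
  unfold slack
  split_ifs
  · rfl
  · have : 0 ≤ T ^ 2 := by positivity
    linarith
  · have : 0 ≤ T ^ 2 := by positivity
    have : 0 ≤ T ^ 4 := by positivity
    linarith

lemma slack_mul_lt {d : ℕ} (hd : 2 ≤ d) {T : ℝ} (hT : 0 ≤ T) (hT1 : T ≤ 1) :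
    slack d T * T < d := by
  have hd' : (2 : ℝ) ≤ d := by exact_mod_cast hd
  have h2 : T ^ 2 ≤ 1 := pow_le_one₀ hT hT1
  have h4 : T ^ 4 ≤ 1 := pow_le_one₀ hT hT1
  have h : slack d T ≤ 33 / 20 := by
    unfold slack
    split_ifs <;> linarith
  have := mul_le_mul h hT1 hT (by norm_num)
  linarith

lemma continuous_slack (d : ℕ) : Continuous (slack d) := by
  unfold slack
  split_ifs <;> fun_prop

lemma stepMap_slack_lt {d : ℕ} (hd : 2 ≤ d) {T : ℝ} (hT : T ∈ Set.Ioo (0 : ℝ) 1) :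
    stepMap d (slack d T * T / d) < T := by
  have hpos : ∀ T ∈ Set.Ico (0 : ℝ) 1, 0 ≤ slack d T * T := fun T hT =>
    mul_nonneg (zero_le_one.trans (one_le_slack d T)) hT.1
  have hlt : ∀ T ∈ Set.Ico (0 : ℝ) 1, slack d T * T < d := fun T hT =>
    slack_mul_lt hd hT.1 hT.2.le
  by_cases h2 : d = 2
  · subst h2
    refine stepMap_lt (φ := fun T => slack 2 T * T) (φ' := fun _ => 1) (by norm_num) ?_ (by simp)
      hpos hlt ?_ hT
    · intro T
      simpa [slack] using hasDerivAt_id' T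
    · intro T hT
      have : 0 < T ^ 2 := pow_pos hT.1 2
      simp [slack]
      linarith
  by_cases h3 : d = 3
  · subst h3
    refine stepMap_lt (φ := fun T => slack 3 T * T) (φ' := fun T => 1 + 3 * T ^ 2 / 4)
      (by norm_num) ?_ (by simp) hpos hlt ?_ hT
    · intro T
      have h := (hasDerivAt_id T).add (((hasDerivAt_id T).pow 3).div_const 4)
      refine (h.congr_deriv ?_).congr_of_eventuallyEq (Eventually.of_forall fun x => ?_)
      · simp
      · simp [slack]
        ring
    · intro T hT
      have h0 : 0 < T ^ 2 := pow_pos hT.1 2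
      have h1 : T ^ 2 < 1 := pow_lt_one₀ hT.1.le hT.2 (by norm_num)
      simp [slack]
      rw [div_pow, mul_pow]
      generalize T ^ 2 = x at *
      have : 0 < x * (1 / 4 + 3 / 4 * x - (1 + x / 4) ^ 2 / 9) := by
        refine mul_pos h0 ?_
        nlinarith
      linarith
  · have hd4 : 4 ≤ d := by omega
    have hd4' : (4 : ℝ) ≤ d := by exact_mod_cast hd4
    refine stepMap_lt (φ := fun T => slack d T * T)
      (φ' := fun T => 1 + 3 * T ^ 2 / 5 + 9 * T ^ 4 / 4)
      (by omega) ?_ (by simp) hpos hlt ?_ hT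
    · intro T
      have h := ((hasDerivAt_id T).add (((hasDerivAt_id T).pow 3).div_const 5)).add
        ((((hasDerivAt_id T).pow 5).const_mul 9).div_const 20)
      refine (h.congr_deriv ?_).congr_of_eventuallyEq (Eventually.of_forall fun x => ?_)
      · simp
        ring
      · simp [slack, h2, h3]
        ring
    · intro T hT
      have h0 : 0 < T ^ 2 := pow_pos hT.1 2
      have h1 : T ^ 2 < 1 := pow_lt_one₀ hT.1.le hT.2 (by norm_num)
      have hle : (slack d T * T / d) ^ 2 ≤ (slack d T * T / 4) ^ 2 := by
        have := hpos T ⟨hT.1.le, hT.2⟩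
        gcongr
      refine lt_of_lt_of_le ?_ (sub_le_sub_left hle 1)
      have e4 : T ^ 4 = (T ^ 2) ^ 2 := by ring
      simp only [slack, h2, h3, if_false]
      rw [div_pow, mul_pow, e4]
      generalize T ^ 2 = x at *
      have : 0 < x * (2 / 5 - 33 / 20 * x + 9 / 4 * x ^ 2 -
          (1 + (x / 5 + 9 * x ^ 2 / 20)) ^ 2 / 16) := by
        refine mul_pos h0 ?_
        nlinarith [sq_nonneg (x - 3 / 8), mul_pos h0 (sub_pos.2 h1),
          mul_nonneg h0.le (sq_nonneg (x - 3 / 8)),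
          mul_nonneg (sub_pos.2 h1).le (sq_nonneg (x - 3 / 8))]
      linarith

/-- Sets of messages `M n` at distance `n` from the leaves. -/
structure MessageSystem (d : ℕ) (b : ℝ) (M : ℕ → Set (Fin 3 → ℝ)) : Prop where
  nonempty : ∀ n, (M n).Nonempty
  isProb : ∀ n, ∀ p ∈ M n, IsProb p
  step : ∀ n, ∀ p ∈ M (n + 1), ∃ q : Fin d → Fin 3 → ℝ, (∀ j, q j ∈ M n) ∧ p = normMessage b q

lemma Balanced.mono {p : Fin 3 → ℝ} {S T : ℝ} (hp : ∀ i, 0 ≤ p i) (h : Balanced S p)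
    (hST : S ≤ T) : Balanced T p := fun i j =>
  (h i j).trans (mul_le_mul_of_nonneg_right hST (add_nonneg (hp i) (hp j)))

lemma MessageSystem.exists_balanced {d : ℕ} {b : ℝ} {M : ℕ → Set (Fin 3 → ℝ)}
    (hM : MessageSystem d b M) (hb : 0 ≤ b) (hb1 : b < 1) :
    ∃ T, 0 ≤ T ∧ T < 1 ∧ ∀ n ≥ 1, ∀ p ∈ M n, Balanced T p := by
  have ht0 : 0 ≤ b / (2 - b) := div_nonneg hb (by linarith)
  have ht1 : b / (2 - b) < 1 := by
    rw [div_lt_one (by linarith)]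
    linarith
  have h1 : 0 < (1 - b / (2 - b)) ^ d := pow_pos (by linarith) d
  have h2 : 0 < (1 + b / (2 - b)) ^ d := pow_pos (by linarith) d
  refine ⟨stepMap d (b / (2 - b)), stepMap_nonneg ht0 ht1, ?_, ?_⟩
  · rw [stepMap, div_lt_one (by linarith)]
    linarith
  · intro n hn p hp
    obtain ⟨m, rfl⟩ := Nat.exists_eq_add_of_le' hn
    obtain ⟨q, hq, rfl⟩ := hM.step m p hp
    have hq' := fun j => hM.isProb m (q j) (hq j)
    refine balanced_normMessage_of_ratio hb hb1 ht0 ht1 hq' ?_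
    intro k i j _
    have e1 : 1 - b / (2 - b) = (1 + b / (2 - b)) * (1 - b) := by
      have : (2 - b) ≠ 0 := by linarith
      field_simp
      ring
    rw [e1, mul_assoc]
    refine mul_le_mul_of_nonneg_left ?_ (by linarith)
    have h3 : b * q k j ≤ b := by nlinarith [(hq' k).le_one j]
    have h4 : 0 ≤ b * q k i := mul_nonneg hb ((hq' k).1 i)
    have : (1 - b) * (1 - b * q k i) ≤ 1 - b := by nlinarith
    linarith

lemma prod_lower {b u v x y : ℝ} (hb : 0 ≤ b) (hb1 : b ≤ 1) (hx : x ≤ u) (hy : y ≤ u)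
    (hu : u ≤ 1) (hv : v ≤ 1) (hxy : x + y ≤ u + v) :
    (1 - b * u) * (1 - b * v) ≤ (1 - b * x) * (1 - b * y) := by
  have hbu : 0 ≤ 1 - b * u := by nlinarith
  have hbv : 0 ≤ 1 - b * v := by nlinarith
  have hbx : b * x ≤ b * u := mul_le_mul_of_nonneg_left hx hb
  have hby : b * y ≤ b * u := mul_le_mul_of_nonneg_left hy hb
  rcases le_total y v with h | h
  · have : b * y ≤ b * v := mul_le_mul_of_nonneg_left h hb
    exact mul_le_mul (by linarith) (by linarith) hbv (by linarith)
  rcases le_total x v with h' | h'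
  · have : b * x ≤ b * v := mul_le_mul_of_nonneg_left h' hb
    rw [mul_comm]
    exact mul_le_mul (by linarith) (by linarith) hbu (by linarith)
  · have h1 : 0 ≤ (u - x) * (x - v) := mul_nonneg (by linarith) (by linarith)
    have h2 : b * y ≤ b * (u + v - x) := mul_le_mul_of_nonneg_left (by linarith) hb
    have h3 : (1 - b * x) * (1 - b * (u + v - x)) ≤ (1 - b * x) * (1 - b * y) :=
      mul_le_mul_of_nonneg_left (by linarith) (by linarith)
    have h4 := mul_nonneg (mul_nonneg hb hb) h1
    linarith

lemma sq_upper {b l v x y : ℝ} (hb : 0 ≤ b) (hb1 : b ≤ 1) (hx : l ≤ x) (hy : l ≤ y)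
    (hx1 : x ≤ 1) (hy1 : y ≤ 1) (hxy : l + v ≤ x + y) :
    (1 - b * x) ^ 2 + (1 - b * y) ^ 2 ≤ (1 - b * l) ^ 2 + (1 - b * v) ^ 2 := by
  have hbx1 : 0 ≤ 1 - b * x := by nlinarith
  have hby1 : 0 ≤ 1 - b * y := by nlinarith
  have hbx : b * l ≤ b * x := mul_le_mul_of_nonneg_left hx hb
  have hby : b * l ≤ b * y := mul_le_mul_of_nonneg_left hy hb
  have hx2 : (1 - b * x) ^ 2 ≤ (1 - b * l) ^ 2 := pow_le_pow_left₀ hbx1 (by linarith) 2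
  have hy2 : (1 - b * y) ^ 2 ≤ (1 - b * l) ^ 2 := pow_le_pow_left₀ hby1 (by linarith) 2
  rcases le_total v y with h | h
  · have h' : b * v ≤ b * y := mul_le_mul_of_nonneg_left h hb
    have : (1 - b * y) ^ 2 ≤ (1 - b * v) ^ 2 := pow_le_pow_left₀ hby1 (by linarith) 2
    linarith
  rcases le_total v x with h' | h'
  · have h'' : b * v ≤ b * x := mul_le_mul_of_nonneg_left h' hb
    have : (1 - b * x) ^ 2 ≤ (1 - b * v) ^ 2 := pow_le_pow_left₀ hbx1 (by linarith) 2
    linarith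
  · have h2 : b * (l + v - x) ≤ b * y := mul_le_mul_of_nonneg_left (by linarith) hb
    have h3 : (1 - b * y) ^ 2 ≤ (1 - b * (l + v - x)) ^ 2 :=
      pow_le_pow_left₀ hby1 (by linarith) 2
    have h4 := mul_nonneg (mul_nonneg hb hb)
      (mul_nonneg (sub_nonneg.2 hx) (sub_nonneg.2 h'))
    linarith

/-- Upper bound for a message whose two children have entries in `[l, u]`. -/
noncomputable def upperMap (b : ℝ) (z : ℝ × ℝ) : ℝ :=
  (1 - b * z.2) ^ 2 /
    ((1 - b * z.2) ^ 2 + 2 * ((1 - b * z.1) * (1 - b * (1 - z.1 - z.2))))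

/-- Lower bound for a message whose two children have entries in `[l, u]`. -/
noncomputable def lowerMap (b : ℝ) (z : ℝ × ℝ) : ℝ :=
  (1 - b * z.1) ^ 2 /
    ((1 - b * z.1) ^ 2 + ((1 - b * z.2) ^ 2 + (1 - b * (1 - z.1 - z.2)) ^ 2))

section OneStep

variable {b u l : ℝ} {q : Fin 2 → Fin 3 → ℝ}

lemma normMessage_eq {d : ℕ} (b : ℝ) (q : Fin d → Fin 3 → ℝ) (c₁ : Fin 3) :
    ∃ c₂ c₃, (∀ f : Fin 3 → ℝ, f c₁ + f c₂ + f c₃ = f 0 + f 1 + f 2) ∧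
      normMessage b q c₁ = message b q c₁ / (message b q c₁ + (message b q c₂ + message b q c₃)) := by
  obtain ⟨c₂, hc₂⟩ : ∃ c₂, c₁ ≠ c₂ := ⟨c₁ + 1, by revert c₁; decide⟩
  obtain ⟨c₃, hc₃⟩ := exists_third c₁ c₂ hc₂
  refine ⟨c₂, c₃, hc₃, ?_⟩
  rw [normMessage, ← hc₃, add_assoc]

lemma normMessage_le_upperMap (hb : 0 ≤ b) (hb1 : b < 1) (hu : u ≤ 1)
    (hul : 0 ≤ u + l) (hq : ∀ j, IsProb (q j)) (hle : ∀ j c, q j c ≤ u) (hge : ∀ j c, l ≤ q j c)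
    (c : Fin 3) : normMessage b q c ≤ upperMap b (u, l) := by
  obtain ⟨c₂, c₃, hc, he⟩ := normMessage_eq b q c
  have hm := message_pos hb hb1 hq
  have hl1 : l ≤ 1 := (hge 0 0).trans ((hq 0).le_one 0)
  have hbl : 0 < 1 - b * l := by nlinarith
  have hbu : 0 < 1 - b * u := by nlinarith
  have hbv : 0 < 1 - b * (1 - u - l) := by nlinarith
  have hpos : ∀ j i, 0 < 1 - b * q j i := fun j i => by
    nlinarith [(hq j).le_one i, (hq j).1 i]
  rw [he]
  simp only [upperMap]
  set K := (1 - b * u) * (1 - b * (1 - u - l)) with hK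
  have hKpos : 0 < K := mul_pos hbu hbv
  have hpair : ∀ j, K ≤ (1 - b * q j c₂) * (1 - b * q j c₃) := by
    intro j
    refine prod_lower hb hb1.le (hle j _) (hle j _) hu (by linarith) ?_
    have h1 := hc (q j)
    rw [(hq j).2] at h1
    linarith [hge j c]
  have h23 : 2 * K ≤ message b q c₂ + message b q c₃ := by
    refine le_of_sq_le_sq ?_ (add_pos (hm c₂) (hm c₃)).le
    have h1 : K * K ≤ message b q c₂ * message b q c₃ := by
      have := mul_le_mul (hpair 0) (hpair 1) hKpos.le (mul_pos (hpos _ _) (hpos _ _)).le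
      simp only [message, Fin.prod_univ_two]
      linarith
    nlinarith [sq_nonneg (message b q c₂ - message b q c₃)]
  have h1 : message b q c ≤ (1 - b * l) ^ 2 := by
    simp only [message, Fin.prod_univ_two, sq]
    have hx : ∀ j, 1 - b * q j c ≤ 1 - b * l := fun j => by
      have := mul_le_mul_of_nonneg_left (hge j c) hb
      linarith
    exact mul_le_mul (hx 0) (hx 1) (hpos _ _).le hbl.le
  rw [div_le_div_iff₀ (by linarith [hm c, hm c₂, hm c₃]) (by positivity)]
  have := mul_le_mul h1 h23 (by positivity) (by positivity)
  linarith

lemma lowerMap_le_normMessage (hb : 0 ≤ b) (hb1 : b < 1) (hu : u ≤ 1)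
    (hul : 0 ≤ u + l) (hq : ∀ j, IsProb (q j)) (hle : ∀ j c, q j c ≤ u) (hge : ∀ j c, l ≤ q j c)
    (c : Fin 3) : lowerMap b (u, l) ≤ normMessage b q c := by
  obtain ⟨c₂, c₃, hc, he⟩ := normMessage_eq b q c
  have hm := message_pos hb hb1 hq
  have hl1 : l ≤ 1 := (hge 0 0).trans ((hq 0).le_one 0)
  have hbl : 0 < 1 - b * l := by nlinarith
  have hbu : 0 < 1 - b * u := by nlinarith
  have hbv : 0 < 1 - b * (1 - u - l) := by nlinarith
  rw [he]
  simp only [lowerMap]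
  have hpair : ∀ j, (1 - b * q j c₂) ^ 2 + (1 - b * q j c₃) ^ 2 ≤
      (1 - b * l) ^ 2 + (1 - b * (1 - u - l)) ^ 2 := by
    intro j
    refine sq_upper hb hb1.le (hge j _) (hge j _) ((hq j).le_one _) ((hq j).le_one _) ?_
    have h1 := hc (q j)
    rw [(hq j).2] at h1
    linarith [hle j c]
  have h23 : message b q c₂ + message b q c₃ ≤
      (1 - b * l) ^ 2 + (1 - b * (1 - u - l)) ^ 2 := by
    simp only [message, Fin.prod_univ_two]
    nlinarith [hpair 0, hpair 1, sq_nonneg ((1 - b * q 0 c₂) - (1 - b * q 1 c₂)),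
      sq_nonneg ((1 - b * q 0 c₃) - (1 - b * q 1 c₃))]
  have h1 : (1 - b * u) ^ 2 ≤ message b q c := by
    simp only [message, Fin.prod_univ_two, sq]
    have hx : ∀ j, 1 - b * u ≤ 1 - b * q j c := fun j => by
      have := mul_le_mul_of_nonneg_left (hle j c) hb
      linarith
    exact mul_le_mul (hx 0) (hx 1) hbu.le (hbu.le.trans (hx 0))
  rw [div_le_div_iff₀ (by positivity) (by linarith [hm c, hm c₂, hm c₃])]
  have := mul_le_mul h1 h23 (by linarith [hm c₂, hm c₃]) (hm c).le
  linarith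

end OneStep

lemma not_fixed_of_five_mul_le {U L : ℝ} (hL : 0 ≤ L) (hU : 1 / 2 < U) (h5 : 5 * L ≤ U)
    (h1 : 2 * U * (U + L) ≤ (1 - L) ^ 2)
    (h2 : (1 - L) * (1 - U) ^ 2 ≤ L * ((1 - L) ^ 2 + (U + L) ^ 2)) : False := by
  have hL8 : L ≤ 23 / 200 := by
    by_contra! hc
    have h3 : (5 * L) * (6 * L) ≤ U * (U + L) :=
      mul_le_mul h5 (by linarith) (by linarith) (by linarith)
    nlinarith only [h3, h1, hc]
  have hUl : U ≤ 709 / 1000 - 118 / 100 * L := by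
    by_contra! hc
    have h3 : (709 / 1000 - 118 / 100 * L) * (709 / 1000 - 18 / 100 * L) ≤ U * (U + L) :=
      mul_le_mul hc.le (by linarith) (by linarith) (by linarith)
    nlinarith only [h3, h1, hL, hL8, mul_nonneg hL (sub_nonneg.2 hL8)]
  have h7 : (291 / 1000 + 118 / 100 * L) ^ 2 ≤ (1 - U) ^ 2 :=
    pow_le_pow_left₀ (by linarith) (by linarith) 2
  have h8 : (U + L) ^ 2 ≤ (709 / 1000 - 18 / 100 * L) ^ 2 :=
    pow_le_pow_left₀ (by linarith) (by linarith) 2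
  have h9 := mul_le_mul_of_nonneg_left h7 (by linarith : 0 ≤ 1 - L)
  have h10 := mul_le_mul_of_nonneg_left h8 hL
  nlinarith only [h9, h10, h2, hL, hL8, mul_nonneg hL (sub_nonneg.2 hL8),
    mul_nonneg (mul_nonneg hL hL) (sub_nonneg.2 hL8)]

/-- The fixed-point inequalities for the extreme messages force a ratio below `5`. -/
lemma lt_five_mul_of_fixed {b U L : ℝ} (hb : 0 < b) (hb1 : b < 1) (hU1 : U ≤ 1)
    (hU3 : 1 / 3 ≤ U) (hL : 0 ≤ L)
    (h1 : 2 * U * ((1 - b * U) * (1 - b * (1 - U - L))) ≤ (1 - U) * (1 - b * L) ^ 2)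
    (h2 : (1 - L) * (1 - b * U) ^ 2 ≤ L * ((1 - b * L) ^ 2 + (1 - b * (1 - U - L)) ^ 2)) :
    U < 5 * L := by
  by_contra! h5
  have hbU : 0 < 1 - b * U := by nlinarith
  have h1' : 2 * U * (1 - b * (1 - U - L)) ≤ (1 - b * L) ^ 2 := by
    have h3 : (1 - U) * (1 - b * L) ^ 2 ≤ (1 - b * U) * (1 - b * L) ^ 2 :=
      mul_le_mul_of_nonneg_right (by nlinarith) (sq_nonneg _)
    refine le_of_mul_le_mul_left ?_ hbU
    linarith
  rcases le_or_gt U (1 / 2) with hU | hU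
  · have h3 : (1 / 2) ^ 2 ≤ (1 - b * U) ^ 2 := pow_le_pow_left₀ (by norm_num) (by nlinarith) 2
    have h4 : (1 - b * L) ^ 2 ≤ 1 := by
      refine pow_le_one₀ ?_ ?_ <;> nlinarith
    have h6 : (1 - b * (1 - U - L)) ^ 2 ≤ 1 := by
      refine pow_le_one₀ ?_ ?_ <;> nlinarith
    nlinarith
  · have hh1 : 2 * U * (U + L) ≤ (1 - L) ^ 2 := by
      have e : 0 ≤ b * ((1 - L) ^ 2 - 2 * U * (U + L)) := by
        have : 0 ≤ b * (1 - b) * L ^ 2 := by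
          have : 0 ≤ 1 - b := by linarith
          positivity
        nlinarith
      have := nonneg_of_mul_nonneg_right e hb
      linarith
    have hh2 : (1 - L) * (1 - U) ^ 2 ≤ L * ((1 - L) ^ 2 + (U + L) ^ 2) := by
      have hr : ∀ x, 0 ≤ 1 - b * x → x ≤ U →
          (1 - U) ^ 2 * (1 - b * x) ^ 2 ≤ (1 - b * U) ^ 2 * (1 - x) ^ 2 := by
        intro x hx hxU
        rw [← mul_pow, ← mul_pow]
        refine pow_le_pow_left₀ (mul_nonneg (by linarith) hx) ?_ 2
        nlinarith [mul_nonneg (sub_nonneg.2 hb1.le) (sub_nonneg.2 hxU)]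
      have r1 := hr L (by nlinarith) (by linarith)
      have r2 := hr (1 - U - L) (by nlinarith) (by linarith)
      have h3 := mul_le_mul_of_nonneg_left h2 (sq_nonneg (1 - U))
      have h4 := mul_le_mul_of_nonneg_left (add_le_add r1 r2) hL
      have hsq : 0 < (1 - b * U) ^ 2 := by positivity
      refine le_of_mul_le_mul_left ?_ hsq
      have e : 1 - (1 - U - L) = U + L := by ring
      rw [e] at h4
      linarith
    exact not_fixed_of_five_mul_le hL hU h5 hh1 hh2

lemma MessageSystem.eventually_balanced_two {b : ℝ} {M : ℕ → Set (Fin 3 → ℝ)}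
    (hM : MessageSystem 2 b M) (hb : 0 < b) (hb1 : b < 1) :
    ∃ n₀, ∀ n ≥ n₀, ∀ p ∈ M n, Balanced (2 / 3) p := by
  set A : Set ℝ := {u | u ≤ 1 ∧ ∃ n₀, ∀ n ≥ n₀, ∀ p ∈ M n, ∀ c, p c ≤ u} with hA
  set B : Set ℝ := {l | 0 ≤ l ∧ ∃ n₀, ∀ n ≥ n₀, ∀ p ∈ M n, ∀ c, l ≤ p c} with hB
  have hA1 : (1 : ℝ) ∈ A := ⟨le_rfl, 0, fun n _ p hp c => (hM.isProb n p hp).le_one c⟩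
  have hB0 : (0 : ℝ) ∈ B := ⟨le_rfl, 0, fun n _ p hp c => (hM.isProb n p hp).1 c⟩
  have hA3 : ∀ u ∈ A, 1 / 3 ≤ u := by
    rintro u ⟨-, n₀, h⟩
    obtain ⟨p, hp⟩ := hM.nonempty n₀
    have := (hM.isProb n₀ p hp).2
    linarith [h n₀ le_rfl p hp 0, h n₀ le_rfl p hp 1, h n₀ le_rfl p hp 2]
  have hB3 : ∀ l ∈ B, l ≤ 1 / 3 := by
    rintro l ⟨-, n₀, h⟩
    obtain ⟨p, hp⟩ := hM.nonempty n₀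
    have := (hM.isProb n₀ p hp).2
    linarith [h n₀ le_rfl p hp 0, h n₀ le_rfl p hp 1, h n₀ le_rfl p hp 2]
  have hAb : BddBelow A := ⟨1 / 3, hA3⟩
  have hBb : BddAbove B := ⟨1 / 3, hB3⟩
  have hU1 : sInf A ≤ 1 := csInf_le hAb hA1
  have hU3 : 1 / 3 ≤ sInf A := le_csInf ⟨1, hA1⟩ hA3
  have hL0 : 0 ≤ sSup B := le_csSup hBb hB0
  have hL3 : sSup B ≤ 1 / 3 := csSup_le ⟨0, hB0⟩ hB3
  set U := sInf A
  set L := sSup B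
  have hbl : 0 < 1 - b * L := by nlinarith
  have hbu : 0 < 1 - b * U := by nlinarith
  have hbv : 0 < 1 - b * (1 - U - L) := by nlinarith
  have happrox : ∀ ε > 0, ∃ u ∈ A, ∃ l ∈ B, dist (u, l) (U, L) < ε := by
    intro ε hε
    obtain ⟨u, hu, hu'⟩ := exists_lt_of_csInf_lt ⟨1, hA1⟩ (show sInf A < U + ε by linarith)
    obtain ⟨l, hl, hl'⟩ := exists_lt_of_lt_csSup ⟨0, hB0⟩ (show L - ε < sSup B by linarith)
    refine ⟨u, hu, l, hl, ?_⟩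
    have h1 : U ≤ u := csInf_le hAb hu
    have h2 : l ≤ L := le_csSup hBb hl
    rw [Prod.dist_eq, max_lt_iff, Real.dist_eq, Real.dist_eq, abs_lt, abs_lt]
    refine ⟨⟨?_, ?_⟩, ?_, ?_⟩ <;> simp only <;> linarith
  have hstep : ∀ u ∈ A, ∀ l ∈ B, upperMap b (u, l) ∈ A ∧ lowerMap b (u, l) ∈ B := by
    intro u hu l hl
    have hu3 := hA3 u hu
    have hl3 := hB3 l hl
    obtain ⟨hu1, n₁, h₁⟩ := hu
    obtain ⟨hl0, n₂, h₂⟩ := hl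
    have hbu : 0 < 1 - b * u := by nlinarith
    have hbv : 0 < 1 - b * (1 - u - l) := by nlinarith
    have hchild : ∀ n ≥ max n₁ n₂ + 1, ∀ p ∈ M n, ∃ q : Fin 2 → Fin 3 → ℝ,
        (∀ j, IsProb (q j)) ∧ (∀ j c, q j c ≤ u) ∧ (∀ j c, l ≤ q j c) ∧ p = normMessage b q := by
      intro n hn p hp
      obtain ⟨m, rfl⟩ : ∃ m, n = m + 1 := ⟨n - 1, by omega⟩
      obtain ⟨q, hq, rfl⟩ := hM.step m p hp
      exact ⟨q, fun j => hM.isProb m _ (hq j), fun j => h₁ m (by omega) _ (hq j),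
        fun j => h₂ m (by omega) _ (hq j), rfl⟩
    refine ⟨⟨?_, max n₁ n₂ + 1, ?_⟩, ?_, max n₁ n₂ + 1, ?_⟩
    · refine div_le_one_of_le₀ ?_ (by positivity)
      have := mul_pos hbu hbv
      simp only
      linarith
    · intro n hn p hp c
      obtain ⟨q, hq, hle, hge, rfl⟩ := hchild n hn p hp
      exact normMessage_le_upperMap hb.le hb1 hu1 (by linarith) hq hle hge c
    · unfold lowerMap
      positivity
    · intro n hn p hp c
      obtain ⟨q, hq, hle, hge, rfl⟩ := hchild n hn p hp
      exact lowerMap_le_normMessage hb.le hb1 hu1 (by linarith) hq hle hge c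
  have hKU : 0 < (1 - b * L) ^ 2 + 2 * ((1 - b * U) * (1 - b * (1 - U - L))) := by positivity
  have hKL : 0 < (1 - b * U) ^ 2 + ((1 - b * L) ^ 2 + (1 - b * (1 - U - L)) ^ 2) := by positivity
  have hcU : ContinuousAt (upperMap b) (U, L) := by
    unfold upperMap
    exact ContinuousAt.div (by fun_prop) (by fun_prop) hKU.ne'
  have hcL : ContinuousAt (lowerMap b) (U, L) := by
    unfold lowerMap
    exact ContinuousAt.div (by fun_prop) (by fun_prop) hKL.ne'
  have hfU : U ≤ upperMap b (U, L) := by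
    by_contra! h
    obtain ⟨ε, hε, hnear⟩ := Metric.eventually_nhds_iff.1 (hcU.eventually_lt_const h)
    obtain ⟨u, hu, l, hl, hd⟩ := happrox ε hε
    exact absurd (csInf_le hAb (hstep u hu l hl).1) (not_le.2 (hnear hd))
  have hfL : lowerMap b (U, L) ≤ L := by
    by_contra! h
    obtain ⟨ε, hε, hnear⟩ := Metric.eventually_nhds_iff.1 (hcL.eventually_const_lt h)
    obtain ⟨u, hu, l, hl, hd⟩ := happrox ε hε
    exact absurd (le_csSup hBb (hstep u hu l hl).2) (not_le.2 (hnear hd))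
  have h5 : U < 5 * L := by
    refine lt_five_mul_of_fixed hb hb1 hU1 hU3 hL0 ?_ ?_
    · simp only [upperMap] at hfU
      rw [le_div_iff₀ hKU] at hfU
      linarith
    · simp only [lowerMap] at hfL
      rw [div_le_iff₀ hKL] at hfL
      linarith
  obtain ⟨u, ⟨-, n₁, h₁⟩, l, ⟨-, n₂, h₂⟩, hd⟩ := happrox ((5 * L - U) / 6) (by linarith)
  rw [Prod.dist_eq, max_lt_iff, Real.dist_eq, Real.dist_eq, abs_lt, abs_lt] at hd
  simp only at hd
  have hul : u ≤ 5 * l := by linarith [hd.1.2, hd.2.1]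
  refine ⟨max n₁ n₂, fun n hn p hp i j => ?_⟩
  linarith [h₁ n (le_trans (le_max_left _ _) hn) p hp i,
    h₂ n (le_trans (le_max_right _ _) hn) p hp j]

lemma extremalIneq_slack {d : ℕ} {T : ℝ} (hd : 2 ≤ d) (hT : 0 < T) (hT1 : T ≤ 1)
    (h2 : d = 2 → T ≤ 2 / 3) :
    ExtremalIneq d (3 - 3 / ((d : ℝ) + 1)) (3 / ((d : ℝ) + 1)) T (slack d T) := by
  rcases (by omega : d = 2 ∨ d = 3 ∨ 4 ≤ d) with rfl | rfl | hd4
  · have h := extremalIneq_two hT.le (h2 rfl)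
    norm_num [slack] at h ⊢
    exact h
  · have h := extremalIneq_three hT.le hT1
    norm_num [slack] at h ⊢
    exact h
  · have hd' : (4 : ℝ) ≤ d := by exact_mod_cast hd4
    rw [slack, if_neg (by omega), if_neg (by omega)]
    refine extremalIneq_of_four_le (by positivity) ?_ ?_ hT hT1
    · rw [div_le_div_iff₀ (by positivity) (by norm_num)]
      linarith
    · field_simp
      ring

/-- Eventual balance with any constant below the threshold improves to arbitrary precision. -/
lemma MessageSystem.eventually_balanced {d : ℕ} {b T₀ : ℝ} {M : ℕ → Set (Fin 3 → ℝ)}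
    (hM : MessageSystem d b M) (hd : 2 ≤ d) (hb : 0 ≤ b) (hb1 : b < 1)
    (hbd : b ≤ 3 / ((d : ℝ) + 1)) (hT₀ : 0 ≤ T₀) (hT₀1 : T₀ < 1) (h2 : d = 2 → T₀ ≤ 2 / 3)
    (hbal : ∃ n₀, ∀ n ≥ n₀, ∀ p ∈ M n, Balanced T₀ p) {ε : ℝ} (hε : 0 < ε) :
    ∃ n₀, ∀ n ≥ n₀, ∀ p ∈ M n, Balanced ε p := by
  set S : Set ℝ := {T | 0 ≤ T ∧ T ≤ T₀ ∧ ∃ n₀, ∀ n ≥ n₀, ∀ p ∈ M n, Balanced T p} with hS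
  have hmem : T₀ ∈ S := ⟨hT₀, le_rfl, hbal⟩
  have hbdd : BddBelow S := ⟨0, fun T hT => hT.1⟩
  have hd0 : (0 : ℝ) < d := by exact_mod_cast (by omega : 0 < d)
  have hd2 : (2 : ℝ) ≤ d := by exact_mod_cast hd
  have hstep : ∀ T ∈ S, 0 < T → stepMap d (slack d T * T / d) ∈ S := by
    rintro T ⟨hT0, hTT, n₀, hn₀⟩ hT
    have hT1 : T < 1 := hTT.trans_lt hT₀1
    have hlt := slack_mul_lt hd hT.le hT1.le
    have hl : 0 ≤ slack d T := zero_le_one.trans (one_le_slack d T)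
    refine ⟨stepMap_nonneg (by positivity) ((div_lt_one hd0).2 hlt),
      ((stepMap_slack_lt hd ⟨hT, hT1⟩).le.trans hTT), n₀ + 2, ?_⟩
    intro n hn p hp
    obtain ⟨m, rfl⟩ : ∃ m, n = m + 1 + 1 := ⟨n - 2, by omega⟩
    obtain ⟨q, hq, rfl⟩ := hM.step _ p hp
    choose r hr hqr using fun j => hM.step m (q j) (hq j)
    obtain rfl : q = fun j => normMessage b (r j) := funext hqr
    refine balanced_two_step (b := 3 / ((d : ℝ) + 1)) (by omega) ?_ ?_ hb hb1 hbd hT hT1.le hl hlt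
      (extremalIneq_slack hd hT hT1.le fun h => hTT.trans (h2 h))
      (fun j k => hM.isProb m _ (hr j k)) (fun j k => hn₀ m (by omega) _ (hr j k))
    · field_simp
      ring
    · rw [div_le_one (by positivity)]
      linarith
  have hinf : sInf S ≤ 0 := by
    by_contra! hpos
    have hle : sInf S ≤ T₀ := csInf_le hbdd hmem
    have hlt1 : sInf S < 1 := hle.trans_lt hT₀1
    have hcont : ContinuousAt (fun T => stepMap d (slack d T * T / d)) (sInf S) := by
      have hl : 0 ≤ slack d (sInf S) := zero_le_one.trans (one_le_slack d _)
      have h1 : ContinuousAt (stepMap d) (slack d (sInf S) * sInf S / d) :=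
        continuousAt_stepMap (by positivity)
          ((div_lt_one hd0).2 (slack_mul_lt hd hpos.le hlt1.le))
      have h2 : ContinuousAt (fun T => slack d T * T / d) (sInf S) :=
        (((continuous_slack d).mul continuous_id).div_const _).continuousAt
      exact ContinuousAt.comp (f := fun T => slack d T * T / d) h1 h2
    obtain ⟨δ, hδ, hnear⟩ := Metric.eventually_nhds_iff.1
      (hcont.eventually_lt_const (stepMap_slack_lt hd ⟨hpos, hlt1⟩))
    obtain ⟨T, hT, hTδ⟩ := exists_lt_of_csInf_lt ⟨T₀, hmem⟩ (lt_add_of_pos_right (sInf S) hδ)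
    have hTS : sInf S ≤ T := csInf_le hbdd hT
    have hd : dist T (sInf S) < δ := by
      rw [Real.dist_eq, abs_of_nonneg (by linarith)]
      linarith
    exact absurd (csInf_le hbdd (hstep T hT (hpos.trans_le hTS))) (not_le.2 (hnear hd))
  obtain ⟨T, ⟨-, -, n₀, hn₀⟩, hTε⟩ := exists_lt_of_csInf_lt ⟨T₀, hmem⟩ (hinf.trans_lt hε)
  exact ⟨n₀, fun n hn p hp => (hn₀ n hn p hp).mono (hM.isProb n p hp).1 hTε.le⟩

lemma Balanced.abs_sub_le {p : Fin 3 → ℝ} {T : ℝ} (h : Balanced T p) (hp : IsProb p) (hT : 0 ≤ T)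
    (c : Fin 3) : |p c - 1 / 3| ≤ 2 * T := by
  have hdiff : ∀ i j, p i - p j ≤ 2 * T := fun i j =>
    (h i j).trans (by nlinarith [hp.le_one i, hp.le_one j])
  have hsum := hp.2
  rw [abs_le]
  constructor
  · linarith [hdiff 0 c, hdiff 1 c, hdiff 2 c]
  · linarith [hdiff c 0, hdiff c 1, hdiff c 2]

lemma messageSystem_condRootProb (d : ℕ) {β : ℝ} (hβ : 0 < β) :
    MessageSystem d (1 - β) fun n => Set.range fun τ => condRootProb 3 d n β τ where
  nonempty n := Set.range_nonempty _
  isProb := by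
    rintro n _ ⟨τ, rfl⟩
    refine ⟨condRootProb_nonneg hβ.le τ, ?_⟩
    rw [← sum_condRootProb hβ τ (by norm_num), Fin.sum_univ_three]
  step := by
    rintro n _ ⟨τ, rfl⟩
    refine ⟨fun j => condRootProb 3 d n β (subBoundary τ j), fun j => ⟨_, rfl⟩, ?_⟩
    funext c
    simp only [condRootProb_succ hβ τ (by norm_num : 0 < 3), normMessage, Fin.sum_univ_three]

lemma tendsto_iSup_abs_condRootProb {d : ℕ} {β : ℝ}
    (h : (d = 2 ∧ 0 < β ∧ β < 1) ∨
      (3 ≤ d ∧ ((d : ℝ) - 2) / ((d : ℝ) + 1) ≤ β ∧ β < 1)) (c : Fin 3) :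
    Tendsto (fun n : ℕ => ⨆ τ : (Fin n → Fin d) → Fin 3, |condRootProb 3 d n β τ c - 1 / 3|)
      atTop (nhds 0) := by
  have hβ : 0 < β := by
    rcases h with ⟨-, h, -⟩ | ⟨hd, h, -⟩
    · exact h
    · have hd' : (3 : ℝ) ≤ d := by exact_mod_cast hd
      exact (div_pos (by linarith) (by linarith)).trans_le h
  have hβ1 : β < 1 := by
    rcases h with h | h
    · exact h.2.2
    · exact h.2.2
  have hM := messageSystem_condRootProb d hβ
  have hbal : ∀ ε > 0, ∃ n₀, ∀ n ≥ n₀, ∀ τ, Balanced ε (condRootProb 3 d n β τ) := by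
    intro ε hε
    suffices H : ∃ n₀, ∀ n ≥ n₀, ∀ p ∈ Set.range fun τ => condRootProb 3 d n β τ, Balanced ε p by
      simpa only [Set.forall_mem_range] using H
    rcases h with ⟨rfl, -⟩ | ⟨hd, hβd, -⟩
    · exact hM.eventually_balanced le_rfl (by linarith) (by linarith) (by norm_num; linarith)
        (by norm_num) (by norm_num) (fun _ => le_rfl)
        (hM.eventually_balanced_two (by linarith) (by linarith)) hε
    · obtain ⟨T, hT, hT1, hT'⟩ := hM.exists_balanced (by linarith) (by linarith)
      have hd0 : (0 : ℝ) < d + 1 := by positivity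
      refine hM.eventually_balanced (by omega) (by linarith) (by linarith) ?_ hT hT1
        (fun h => by omega) ⟨1, hT'⟩ hε
      rw [div_le_iff₀ hd0] at hβd
      rw [le_div_iff₀ hd0]
      linarith
  rw [Metric.tendsto_atTop]
  intro ε hε
  obtain ⟨n₀, hn₀⟩ := hbal (ε / 4) (by positivity)
  refine ⟨n₀, fun n hn => ?_⟩
  rw [Real.dist_eq, sub_zero, abs_of_nonneg (Real.iSup_nonneg fun _ => abs_nonneg _)]
  refine lt_of_le_of_lt (ciSup_le fun τ => ?_) (half_lt_self hε)
  have := (hn₀ n hn τ).abs_sub_le (hM.isProb n _ ⟨τ, rfl⟩) (by positivity) c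
  linarith

end PottsTree

/-- **Uniqueness for the 3-state antiferromagnetic Potts model on the `d`-ary tree.**
When `d ≥ 3` and `β ∈ [(d-2)/(d+1), 1)`, and when `d = 2` and `β ∈ (0,1)`,
for every colour `c ∈ [3]` the limsup over `n` of the maximal deviation of the conditional
root marginal from `1/3` (over boundary configurations `τ`) is `0`. -/
theorem potts_q3_uniqueness (d : ℕ) (β : ℝ)
    (h : (d = 2 ∧ 0 < β ∧ β < 1) ∨
      (3 ≤ d ∧ ((d : ℝ) - 2) / ((d : ℝ) + 1) ≤ β ∧ β < 1)) :
    ∀ c : Fin 3,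
      Filter.limsup
        (fun n : ℕ =>
          ⨆ τ : (Fin n → Fin d) → Fin 3, |condRootProb 3 d n β τ c - 1 / 3|)
        Filter.atTop = 0 := by
  exact fun c => (PottsTree.tendsto_iSup_abs_condRootProb h c).limsup_eq
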